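/- arXiv:1908.05272 — 4 statements merged into one kernel-verified Lean document; each statement's English description precedes it below -/
import Mathlib

section
/- Suppose that almost surely the realized p-value function p_ω satisfies (G1w), (G2w) and (a1)–(a3); that the process (p(·,t))_{t∈T} is PRDS on U; and that P(p(·,t) ≤ x) ≤ x for every t ∈ U and x ∈ [0,1]. Then the weighted step-k false discovery proportions converge almost surely to the limiting false discovery proportion, Q_k → Q, and limsup_{k→∞} E[Q_k] ≤ α·ν(U)/ν(T) ≤ α. -/
open Filter Set MeasureTheory
open scoped Classical

/-!
The adjusted threshold `α*` and its grid approximations `b_k` are the largest fixed points of `α F`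
for the normalized cumulated p-value functions `F`. Self-consistency at the fixed point makes the
weight of the rejected points of `S_k` proportional to `b_k`, so that `E[Q_k]` is `α` times a
weighted sum over the null points `t` of `E[1_{p(t) ≤ b_k} / b_k]`. As `b_k` is nonincreasing in the
p-values and takes finitely many values, PRDS lets the sum over these values telescope, and each
expectation is at most `1`. Hence `E[Q_k]` is at most `α` times the null fraction of the grid
weights, which converges to `ν(U) / ν(T)`.

For a single realization, (G1w) gives uniform convergence of the empirical cumulated p-value
functions. Their limit is continuous by (a1); it stays below the line `r / α` beyond `α*`, and if
`α* > 0` it lies above this line arbitrarily close to `α*` by (a2), which forces `b_k → α*`. The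
rejected weight is then positive in the limit, and the numerator and the denominator of `Q_k`
converge separately. If `α* = 0`, (a3) makes the rejection sets eventually empty.
-/

namespace FBH

open ProbabilityTheory Topology

section Threshold

/-- The step-up (Benjamini–Hochberg) threshold at level `α` of a normalized cumulated p-value
function `F`; both the adjusted threshold `α*` and its grid approximations `b_k` are of this
form. -/
noncomputable def bhThreshold (α : ℝ) (F : ℝ → ℝ) : ℝ :=
  sSup {r ∈ Icc (0 : ℝ) 1 | r / α ≤ F r}

variable {α c r : ℝ} {F G : ℝ → ℝ}

lemma le_bhThreshold (hr : r ∈ Icc (0 : ℝ) 1) (h : r / α ≤ F r) : r ≤ bhThreshold α F :=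
  le_csSup ⟨1, fun _ hs => hs.1.2⟩ ⟨hr, h⟩

lemma bhThreshold_nonneg : 0 ≤ bhThreshold α F :=
  Real.sSup_nonneg fun _ hs => hs.1.1

lemma bhThreshold_le (hc : 0 ≤ c) (h : ∀ r ∈ Icc (0 : ℝ) 1, r / α ≤ F r → r ≤ c) :
    bhThreshold α F ≤ c :=
  Real.sSup_le (fun r hr => h r hr.1 hr.2) hc

lemma bhThreshold_le_level (hα : 0 < α) (hF : ∀ r, F r ≤ 1) : bhThreshold α F ≤ α :=
  bhThreshold_le hα.le fun r _ hr => (div_le_one₀ hα).1 (hr.trans (hF r))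

lemma bhThreshold_mem_Icc : bhThreshold α F ∈ Icc (0 : ℝ) 1 :=
  ⟨bhThreshold_nonneg, bhThreshold_le zero_le_one fun _ hr _ => hr.2⟩

lemma bhThreshold_mono (h : ∀ r, F r ≤ G r) : bhThreshold α F ≤ bhThreshold α G :=
  bhThreshold_le bhThreshold_nonneg fun r hr hrF => le_bhThreshold hr (hrF.trans (h r))

/-- Knaster–Tarski: the threshold is the largest fixed point of `α • F`. -/
lemma mul_apply_bhThreshold (hα : α ∈ Ioc (0 : ℝ) 1) (hF : Monotone F)
    (hF01 : ∀ r, F r ∈ Icc (0 : ℝ) 1) : α * F (bhThreshold α F) = bhThreshold α F := by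
  have hge : bhThreshold α F ≤ α * F (bhThreshold α F) := by
    refine bhThreshold_le (mul_nonneg hα.1.le (hF01 _).1) fun r hr hrF => ?_
    rw [div_le_iff₀' hα.1] at hrF
    exact hrF.trans (mul_le_mul_of_nonneg_left (hF (le_bhThreshold hr ((div_le_iff₀' hα.1).2 hrF)))
      hα.1.le)
  refine le_antisymm (le_bhThreshold ?_ ?_) hge
  · exact ⟨mul_nonneg hα.1.le (hF01 _).1, mul_le_one₀ hα.2 (hF01 _).1 (hF01 _).2⟩
  · rw [mul_div_cancel_left₀ _ hα.1.ne']
    exact hF hge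

lemma bhThreshold_le_iff (hα : α ∈ Ioc (0 : ℝ) 1) (hF : Monotone F)
    (hF01 : ∀ r, F r ∈ Icc (0 : ℝ) 1) {R : Set ℝ} (hR : R ⊆ Icc 0 1) (hFR : ∀ r, α * F r ∈ R) :
    bhThreshold α F ≤ c ↔ ∀ r ∈ R, c < r → F r < r / α := by
  refine ⟨fun h r hr hcr => ?_, fun h => ?_⟩
  · contrapose! hcr
    exact (le_bhThreshold (hR hr) hcr).trans h
  · have hfix := mul_apply_bhThreshold hα hF hF01
    contrapose! h
    refine ⟨_, hfix ▸ hFR _, h, ?_⟩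
    rw [div_le_iff₀' hα.1, hfix]

section Convergence

variable {κ : Type*} {l : Filter κ} {Fk : κ → ℝ → ℝ}

lemma eventually_bhThreshold_le (hF : ContinuousOn F (Icc 0 1))
    (hFk : TendstoLocallyUniformlyOn Fk F l (Icc 0 1)) (hc : bhThreshold α F < c) :
    ∀ᶠ k in l, bhThreshold α (Fk k) ≤ c := by
  have hpos : ∀ r ∈ Icc (0 : ℝ) 1 ∩ Ici c, 0 < r / α - F r := by
    rintro r ⟨hr, hcr⟩
    contrapose! hc
    exact hcr.trans (le_bhThreshold hr (sub_nonpos.1 hc))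
  have hcont : ContinuousOn (fun r => r / α - F r) (Icc 0 1 ∩ Ici c) :=
    (by fun_prop : ContinuousOn (fun r : ℝ => r / α) _).sub (hF.mono inter_subset_left)
  obtain ⟨δ, hδ, hδF⟩ :=
    (isCompact_Icc.inter_right isClosed_Ici).exists_forall_le' hcont hpos
  have hunif := (tendstoLocallyUniformlyOn_iff_tendstoUniformlyOn_of_compact isCompact_Icc).1 hFk
  filter_upwards [Metric.tendstoUniformlyOn_iff.1 hunif δ hδ] with k hk
  refine bhThreshold_le (bhThreshold_nonneg.trans hc.le) fun r hr hrF => ?_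
  by_contra! hcr
  have hdist := hk r hr
  rw [Real.dist_eq, abs_lt] at hdist
  linarith [hδF r ⟨hr, hcr.le⟩]

lemma eventually_le_bhThreshold (hFk : TendstoLocallyUniformlyOn Fk F l (Icc 0 1))
    (hr : r ∈ Icc (0 : ℝ) 1) (hrF : r / α < F r) : ∀ᶠ k in l, r ≤ bhThreshold α (Fk k) := by
  filter_upwards [(hFk.tendsto_at hr).eventually_const_lt hrF] with k hk
  exact le_bhThreshold hr hk.le

lemma tendsto_bhThreshold (hF : ContinuousOn F (Icc 0 1))
    (hFk : TendstoLocallyUniformlyOn Fk F l (Icc 0 1))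
    (hcross : bhThreshold α F ∈ closure {r ∈ Icc (0 : ℝ) 1 | r / α < F r}) :
    Tendsto (fun k => bhThreshold α (Fk k)) l (𝓝 (bhThreshold α F)) := by
  refine tendsto_order.2 ⟨fun c hc => ?_, fun c hc => ?_⟩
  · obtain ⟨r, hcr, hr, hrF⟩ := mem_closure_iff.1 hcross (Ioi c) isOpen_Ioi hc
    filter_upwards [eventually_le_bhThreshold hFk hr hrF] with k hk
    exact lt_of_lt_of_le hcr hk
  · obtain ⟨d, hd, hdc⟩ := exists_between hc
    filter_upwards [eventually_bhThreshold_le hF hFk hd] with k hk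
    exact hk.trans_lt hdc

end Convergence

end Threshold

section Conditioning

variable {Ω : Type*} {mΩ : MeasurableSpace Ω} {P : Measure Ω}

lemma cond_real_apply {s : Set Ω} (hs : MeasurableSet s) (D : Set Ω) :
    (P[|s]).real D = (P.real s)⁻¹ * P.real (s ∩ D) := by
  simp [measureReal_def, cond_apply hs]

variable [IsFiniteMeasure P]

lemma setAverage_le_setAverage_of_subset {g : Ω → ℝ} {s t : Set Ω} (hst : s ⊆ t)
    (hs : MeasurableSet s) (ht : MeasurableSet t) (hPs : P s ≠ 0) (hg : Integrable g P)
    (hle : ∀ x ∈ s, ∀ y ∈ t \ s, g x ≤ g y) :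
    ⨍ ω in s, g ω ∂P ≤ ⨍ ω in t, g ω ∂P := by
  by_cases hPd : P (t \ s) = 0
  · rw [setAverage_congr ((ae_le_set.2 hPd).antisymm (ae_of_all _ hst))]
  · obtain ⟨x, hx, hgx⟩ := exists_setAverage_le hPs (measure_ne_top P s) hg.integrableOn
    obtain ⟨y, hy, hgy⟩ := exists_le_setAverage hPd (measure_ne_top P _) hg.integrableOn
    have hmem := average_union_mem_segment disjoint_sdiff_self_right.aedisjoint
      (ht.diff hs).nullMeasurableSet (measure_ne_top P s) (measure_ne_top P _)
      hg.integrableOn hg.integrableOn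
    rw [union_sdiff_cancel hst, segment_eq_Icc (hgx.trans ((hle x hx y hy).trans hgy))] at hmem
    exact hmem.1

lemma cond_real_eq_setAverage_condExp {m : MeasurableSpace Ω} (hm : m ≤ mΩ) {s D : Set Ω}
    (hs : MeasurableSet[m] s) (hD : MeasurableSet[mΩ] D) :
    (P[|s]).real D = ⨍ ω in s, (P[D.indicator (fun _ => (1 : ℝ))|m]) ω ∂P := by
  rw [setAverage_eq, setIntegral_condExp hm ((integrable_const (1 : ℝ)).indicator hD) hs,
    setIntegral_indicator hD, setIntegral_const, smul_eq_mul, smul_eq_mul, mul_one,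
    cond_real_apply (hm s hs)]

lemma monotone_cond_real_of_condExp_eq {X : Ω → ℝ} (hX : Measurable X) {I : Set ℝ}
    (hXI : ∀ ω, X ω ∈ I) {D : Set Ω} (hD : MeasurableSet D) {g : ℝ → ℝ} (hg : MonotoneOn g I)
    (hgX : (fun ω => g (X ω)) =ᵐ[P]
      P[D.indicator (fun _ => (1 : ℝ)) | MeasurableSpace.comap X inferInstance]) :
    Monotone fun u => (P[|{ω | X ω ≤ u}]).real D := by
  intro v u hvu
  have hXle (c : ℝ) : MeasurableSet[MeasurableSpace.comap X inferInstance] {ω | X ω ≤ c} :=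
    ⟨Iic c, measurableSet_Iic, rfl⟩
  have hcond (c : ℝ) : (P[|{ω | X ω ≤ c}]).real D = ⨍ ω in {ω | X ω ≤ c}, g (X ω) ∂P := by
    rw [cond_real_eq_setAverage_condExp hX.comap_le (hXle c) hD]
    exact setAverage_congr_fun (hX.comap_le _ (hXle c)) (hgX.symm.mono fun _ h _ => h)
  by_cases hv : P {ω | X ω ≤ v} = 0
  · simp [cond_eq_zero_of_meas_eq_zero hv]
  · simp only [hcond]
    refine setAverage_le_setAverage_of_subset (fun ω hω => le_trans hω hvu)
      (hX.comap_le _ (hXle v)) (hX.comap_le _ (hXle u)) hv (integrable_condExp.congr hgX.symm) ?_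
    exact fun x hx y hy => hg (hXI x) (hXI y) (le_trans hx (not_le.1 hy.2).le)

end Conditioning

section PRDS

variable {Ω E : Type*} [MeasurableSpace Ω]

/-- Positive regression dependence on the subset `U` for the family `(p · t)_{t ∈ T}`. The monotone
version of the conditional expectation is only asked to be monotone on `[0, 1]`, where p-values
live. -/
def IsPRDSOn (P : Measure Ω) (p : Ω → E → ℝ) (T U : Set E) : Prop :=
  ∀ (l : ℕ) (t : Fin l → E), (∀ j, t j ∈ T) → ∀ j, t j ∈ U →
    ∀ D : Set (Fin l → ℝ), MeasurableSet D → IsUpperSet D →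
      ∃ g : ℝ → ℝ, MonotoneOn g (Icc 0 1) ∧
        (fun ω => g (p ω (t j))) =ᵐ[P]
          P[{ω | (fun i => p ω (t i)) ∈ D}.indicator (fun _ => (1 : ℝ)) |
            MeasurableSpace.comap (fun ω => p ω (t j)) inferInstance]

lemma IsPRDSOn.monotone_cond_real {P : Measure Ω} [IsFiniteMeasure P] {p : Ω → E → ℝ}
    {T U : Set E} (h : IsPRDSOn P p T U) {S : Finset E} (hS : ↑S ⊆ T)
    (hp : ∀ s ∈ S, Measurable fun ω => p ω s) (hp01 : ∀ ω, ∀ s ∈ S, p ω s ∈ Icc (0 : ℝ) 1)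
    {t : E} (htS : t ∈ S) (htU : t ∈ U) {D : Set (S → ℝ)} (hD : MeasurableSet D)
    (hup : IsUpperSet D) :
    Monotone fun u => (P[|{ω | p ω t ≤ u}]).real {ω | S.restrict (p ω) ∈ D} := by
  let e := S.equivFin
  have hDe : MeasurableSet {y : Fin S.card → ℝ | y ∘ e ∈ D} :=
    hD.preimage (measurable_pi_lambda _ fun s => measurable_pi_apply (e s))
  obtain ⟨g, hg, hgX⟩ := h S.card (fun i => e.symm i) (fun i => hS (e.symm i).2) (e ⟨t, htS⟩)
    (by simpa using htU) _ hDe fun x y hxy hx => hup (fun s => hxy (e s)) hx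
  have hcoord (ω : Ω) : (fun i => p ω (e.symm i)) ∘ e = S.restrict (p ω) := by
    ext s
    simp
  simp only [mem_ofPred_eq, hcoord, e.symm_apply_apply] at hgX
  exact monotone_cond_real_of_condExp_eq (hp t htS) (hp01 · t htS)
    (hD.preimage (measurable_pi_lambda _ fun s => hp s s.2)) hg hgX

end PRDS

section SelfConsistency

variable {Ω : Type*} {X V : Ω → ℝ}

lemma ite_inv_eq_sum_indicator {R : Finset ℝ} (hVR : ∀ ω, V ω ∈ R) (ω : Ω) :
    (if X ω ≤ V ω then (V ω)⁻¹ else 0) =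
      ∑ v ∈ R, ({ω | X ω ≤ v} ∩ {ω | V ω = v}).indicator (fun _ => v⁻¹) ω := by
  rw [Finset.sum_eq_single_of_mem (V ω) (hVR ω) fun v _ hv =>
    indicator_of_notMem (fun h => hv h.2.symm) _]
  simp [indicator_apply]

variable [MeasurableSpace Ω] {P : Measure Ω}

/-- Telescoping along the values of `V`: positive dependence lets the condition `X ≤ v` be
relaxed to `X ≤ c` before the next value `c` is added. -/
lemma sum_cond_real_eq_le_cond_real_lt (hV : Measurable V)
    (hmono : ∀ c, Monotone fun u => (P[|{ω | X ω ≤ u}]).real {ω | V ω ≤ c}) (R : Finset ℝ) :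
    ∀ c, (∀ v ∈ R, v < c) →
      ∑ v ∈ R, (P[|{ω | X ω ≤ v}]).real {ω | V ω = v} ≤
        (P[|{ω | X ω ≤ c}]).real {ω | V ω < c} := by
  induction R using Finset.induction_on_max with
  | empty => exact fun c _ => by simp
  | insert a R hR ih =>
    intro c hc
    have hac : a < c := hc a (Finset.mem_insert_self a R)
    have hsplit : {ω | V ω ≤ a} = {ω | V ω = a} ∪ {ω | V ω < a} := by
      ext ω
      simp [le_iff_eq_or_lt]
    have hdisj : Disjoint {ω | V ω = a} {ω | V ω < a} :=
      disjoint_left.2 fun ω heq hlt => hlt.ne heq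
    rw [Finset.sum_insert fun ha => (hR a ha).false]
    calc (P[|{ω | X ω ≤ a}]).real {ω | V ω = a}
          + ∑ v ∈ R, (P[|{ω | X ω ≤ v}]).real {ω | V ω = v}
        ≤ (P[|{ω | X ω ≤ a}]).real {ω | V ω = a}
          + (P[|{ω | X ω ≤ a}]).real {ω | V ω < a} := by gcongr; exact ih a hR
      _ = (P[|{ω | X ω ≤ a}]).real {ω | V ω ≤ a} := by
          rw [hsplit, measureReal_union hdisj (measurableSet_lt hV measurable_const)]
      _ ≤ (P[|{ω | X ω ≤ c}]).real {ω | V ω ≤ a} := hmono a hac.le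
      _ ≤ (P[|{ω | X ω ≤ c}]).real {ω | V ω < c} :=
          measureReal_mono fun ω hω => lt_of_le_of_lt hω hac

variable [IsFiniteMeasure P]

lemma measureReal_inter_div_le_cond_real {A B : Set Ω} (hA : MeasurableSet A) {v : ℝ}
    (hv : P.real A ≤ v) : P.real (A ∩ B) / v ≤ (P[|A]).real B := by
  rw [cond_real_apply hA, inv_mul_eq_div]
  obtain hA0 | hApos := measureReal_nonneg.eq_or_lt' (a := P.real A)
  · simp [measureReal_mono_null inter_subset_left hA0]
  · gcongr

lemma sum_measureReal_inter_div_le_one (hX : Measurable X) (hV : Measurable V)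
    (hmono : ∀ c, Monotone fun u => (P[|{ω | X ω ≤ u}]).real {ω | V ω ≤ c}) {R : Finset ℝ}
    (hsuper : ∀ v ∈ R, P.real {ω | X ω ≤ v} ≤ v) :
    ∑ v ∈ R, P.real ({ω | X ω ≤ v} ∩ {ω | V ω = v}) / v ≤ 1 := by
  obtain ⟨b, hb⟩ := R.bddAbove
  obtain ⟨c, hbc⟩ := exists_gt b
  calc ∑ v ∈ R, P.real ({ω | X ω ≤ v} ∩ {ω | V ω = v}) / v
      ≤ ∑ v ∈ R, (P[|{ω | X ω ≤ v}]).real {ω | V ω = v} := Finset.sum_le_sum fun v hv =>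
        measureReal_inter_div_le_cond_real (measurableSet_le hX measurable_const) (hsuper v hv)
    _ ≤ (P[|{ω | X ω ≤ c}]).real {ω | V ω < c} :=
        sum_cond_real_eq_le_cond_real_lt hV hmono R c fun v hv => (hb hv).trans_lt hbc
    _ ≤ 1 := measureReal_le_one

lemma integrable_ite_inv (hX : Measurable X) (hV : Measurable V) {R : Finset ℝ}
    (hVR : ∀ ω, V ω ∈ R) : Integrable (fun ω => if X ω ≤ V ω then (V ω)⁻¹ else 0) P := by
  simp only [ite_inv_eq_sum_indicator hVR]
  exact integrable_finsetSum _ fun v _ => (integrable_const _).indicator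
    ((measurableSet_le hX measurable_const).inter (measurableSet_eq_fun hV measurable_const))

/-- The Blanchard–Roquain bound. At `V = 0` the integrand is `0⁻¹ = 0`. -/
lemma integral_ite_inv_le_one (hX : Measurable X) (hV : Measurable V)
    (hmono : ∀ c, Monotone fun u => (P[|{ω | X ω ≤ u}]).real {ω | V ω ≤ c}) {R : Finset ℝ}
    (hVR : ∀ ω, V ω ∈ R) (hsuper : ∀ v ∈ R, P.real {ω | X ω ≤ v} ≤ v) :
    ∫ ω, (if X ω ≤ V ω then (V ω)⁻¹ else 0) ∂P ≤ 1 := by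
  have hmeas (v : ℝ) : MeasurableSet ({ω | X ω ≤ v} ∩ {ω | V ω = v}) :=
    (measurableSet_le hX measurable_const).inter (measurableSet_eq_fun hV measurable_const)
  simp only [ite_inv_eq_sum_indicator hVR]
  rw [integral_finsetSum _ fun v _ => (integrable_const _).indicator (hmeas v)]
  simp only [integral_indicator_const _ (hmeas _), smul_eq_mul, ← div_eq_mul_inv]
  exact sum_measureReal_inter_div_le_one hX hV hmono hsuper

end SelfConsistency

section EmpiricalThreshold

variable {E : Type*} {S : Finset E} {f : E → ℝ}

/-- The weighted empirical cumulated p-value function `a_k` of a grid `S` with weights `f`. -/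
noncomputable def ecdf (S : Finset E) (f x : E → ℝ) (r : ℝ) : ℝ :=
  (∑ s ∈ S with x s ≤ r, f s) / ∑ s ∈ S, f s

lemma ecdf_restrict (x : E → ℝ) :
    ecdf Finset.univ (S.restrict f) (S.restrict x) = ecdf S f x := by
  ext r
  simp only [ecdf, Finset.sum_filter]
  exact congrArg₂ (· / ·) (Finset.sum_coe_sort S fun s => if x s ≤ r then f s else 0)
    (Finset.sum_coe_sort S f)

lemma measurable_ecdf {Ω : Type*} [MeasurableSpace Ω] {p : Ω → E → ℝ}
    (hp : ∀ s ∈ S, Measurable fun ω => p ω s) (r : ℝ) :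
    Measurable fun ω => ecdf S f (p ω) r := by
  simp only [ecdf, Finset.sum_filter]
  exact (Finset.measurable_fun_sum S fun s hs =>
    measurable_const.ite (measurableSet_le (hp s hs) measurable_const) measurable_const).div_const _

lemma sum_div_sum_mem_Icc (hf : ∀ s ∈ S, 0 ≤ f s) {A : Finset E} (hA : A ⊆ S) :
    (∑ s ∈ A, f s) / ∑ s ∈ S, f s ∈ Icc (0 : ℝ) 1 :=
  ⟨div_nonneg (Finset.sum_nonneg fun s hs => hf s (hA hs)) (Finset.sum_nonneg hf),
    div_le_one_of_le₀ (Finset.sum_le_sum_of_subset_of_nonneg hA fun s hs _ => hf s hs)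
      (Finset.sum_nonneg hf)⟩

lemma ecdf_mem_Icc (hf : ∀ s ∈ S, 0 ≤ f s) (x : E → ℝ) (r : ℝ) : ecdf S f x r ∈ Icc (0 : ℝ) 1 :=
  sum_div_sum_mem_Icc hf (Finset.filter_subset _ _)

lemma ecdf_le_ecdf (hf : ∀ s ∈ S, 0 ≤ f s) {x y : E → ℝ} (hxy : ∀ s ∈ S, x s ≤ y s) {r r' : ℝ}
    (hr : r ≤ r') : ecdf S f y r ≤ ecdf S f x r' := by
  refine div_le_div_of_nonneg_right (Finset.sum_le_sum_of_subset_of_nonneg (fun s hs => ?_)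
    fun s hs _ => hf s (Finset.filter_subset _ _ hs)) (Finset.sum_nonneg hf)
  simp only [Finset.mem_filter] at hs ⊢
  exact ⟨hs.1, (hxy s hs.1).trans (hs.2.trans hr)⟩

lemma monotone_ecdf (hf : ∀ s ∈ S, 0 ≤ f s) (x : E → ℝ) : Monotone (ecdf S f x) :=
  fun _ _ => ecdf_le_ecdf hf fun _ _ => le_rfl

lemma bhThreshold_ecdf_le (hf : ∀ s ∈ S, 0 ≤ f s) {x y : E → ℝ} (hxy : ∀ s ∈ S, x s ≤ y s)
    (α : ℝ) : bhThreshold α (ecdf S f y) ≤ bhThreshold α (ecdf S f x) :=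
  bhThreshold_mono fun _ => ecdf_le_ecdf hf hxy le_rfl

/-- The finite set of values that the threshold of the empirical cumulated p-value function can
take when the p-values vary. -/
noncomputable def attainableThresholds (S : Finset E) (f : E → ℝ) (α : ℝ) : Finset ℝ :=
  S.powerset.image fun A => α * ((∑ s ∈ A, f s) / ∑ s ∈ S, f s)

variable {α : ℝ}

lemma attainableThresholds_subset_Icc (hf : ∀ s ∈ S, 0 ≤ f s) (hα : α ∈ Ioc (0 : ℝ) 1) :
    ↑(attainableThresholds S f α) ⊆ Icc (0 : ℝ) 1 := by
  intro v hv
  obtain ⟨A, hA, rfl⟩ := Finset.mem_image.1 hv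
  have hfrac := sum_div_sum_mem_Icc hf (Finset.mem_powerset.1 hA)
  exact ⟨mul_nonneg hα.1.le hfrac.1, mul_le_one₀ hα.2 hfrac.1 hfrac.2⟩

lemma mul_ecdf_mem_attainableThresholds (x : E → ℝ) (r : ℝ) :
    α * ecdf S f x r ∈ attainableThresholds S f α :=
  Finset.mem_image_of_mem _ (Finset.mem_powerset.2 (Finset.filter_subset _ _))

lemma mul_ecdf_bhThreshold (hf : ∀ s ∈ S, 0 ≤ f s) (hα : α ∈ Ioc (0 : ℝ) 1) (x : E → ℝ) :
    α * ecdf S f x (bhThreshold α (ecdf S f x)) = bhThreshold α (ecdf S f x) :=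
  mul_apply_bhThreshold hα (monotone_ecdf hf x) (ecdf_mem_Icc hf x)

lemma bhThreshold_ecdf_mem_attainableThresholds (hf : ∀ s ∈ S, 0 ≤ f s)
    (hα : α ∈ Ioc (0 : ℝ) 1) (x : E → ℝ) :
    bhThreshold α (ecdf S f x) ∈ attainableThresholds S f α :=
  mul_ecdf_bhThreshold hf hα x ▸ mul_ecdf_mem_attainableThresholds x _

lemma measurable_bhThreshold_ecdf {Ω : Type*} [MeasurableSpace Ω] {p : Ω → E → ℝ}
    (hf : ∀ s ∈ S, 0 ≤ f s) (hα : α ∈ Ioc (0 : ℝ) 1)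
    (hp : ∀ s ∈ S, Measurable fun ω => p ω s) :
    Measurable fun ω => bhThreshold α (ecdf S f (p ω)) := by
  refine measurable_of_Iic fun c => ?_
  have heq : (fun ω => bhThreshold α (ecdf S f (p ω))) ⁻¹' Iic c =
      ⋂ r ∈ attainableThresholds S f α, {ω | c < r → ecdf S f (p ω) r < r / α} := by
    ext ω
    simpa using bhThreshold_le_iff hα (monotone_ecdf hf (p ω)) (ecdf_mem_Icc hf (p ω))
      (attainableThresholds_subset_Icc hf hα) (mul_ecdf_mem_attainableThresholds (p ω))
  rw [heq]
  exact Finset.measurableSet_biInter _ fun r _ => (MeasurableSet.const _).imp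
    (measurableSet_lt (measurable_ecdf hp r) measurable_const)

lemma IsPRDSOn.monotone_cond_real_bhThreshold_le {Ω : Type*} [MeasurableSpace Ω] {P : Measure Ω}
    [IsFiniteMeasure P] {p : Ω → E → ℝ} {T U : Set E} (h : IsPRDSOn P p T U) (hS : ↑S ⊆ T)
    (hp : ∀ s ∈ S, Measurable fun ω => p ω s) (hp01 : ∀ ω, ∀ s ∈ S, p ω s ∈ Icc (0 : ℝ) 1)
    (hf : ∀ s ∈ S, 0 ≤ f s) (hα : α ∈ Ioc (0 : ℝ) 1) {t : E} (htS : t ∈ S) (htU : t ∈ U)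
    (c : ℝ) :
    Monotone fun u => (P[|{ω | p ω t ≤ u}]).real {ω | bhThreshold α (ecdf S f (p ω)) ≤ c} := by
  have hf' : ∀ s ∈ Finset.univ, 0 ≤ S.restrict f s := fun s _ => hf s s.2
  have hD : MeasurableSet
      {y : S → ℝ | bhThreshold α (ecdf Finset.univ (S.restrict f) y) ≤ c} :=
    measurableSet_le
      (measurable_bhThreshold_ecdf (p := id) hf' hα fun s _ => measurable_pi_apply s)
      measurable_const
  have hup : IsUpperSet {y : S → ℝ | bhThreshold α (ecdf Finset.univ (S.restrict f) y) ≤ c} :=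
    fun _ _ hxy hx => (bhThreshold_ecdf_le hf' (fun s _ => hxy s) α).trans hx
  simpa only [mem_ofPred_eq, ecdf_restrict] using
    h.monotone_cond_real hS hp hp01 htS htU hD hup

end EmpiricalThreshold

section FalseDiscoveryRate

variable {E : Type*} {S : Finset E} {f : E → ℝ} {U : Set E} {α : ℝ}

/-- The weighted false discovery proportion, on the grid `S`, of rejecting the points whose p-value
is at most `c`. The paper's convention that it is `0` if nothing is rejected is `x / 0 = 0`. -/
noncomputable def fdp (S : Finset E) (f : E → ℝ) (U : Set E) (x : E → ℝ) (c : ℝ) : ℝ :=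
  (∑ t ∈ S with t ∈ U ∧ x t ≤ c, f t) / ∑ t ∈ S with x t ≤ c, f t

lemma fdp_eq_ite (hf : ∀ s ∈ S, 0 ≤ f s) (x : E → ℝ) (c : ℝ) :
    fdp S f U x c = if 0 < ∑ t ∈ S with x t ≤ c, f t
      then (∑ t ∈ S with t ∈ U ∧ x t ≤ c, f t) / ∑ t ∈ S with x t ≤ c, f t else 0 := by
  have hnonneg : 0 ≤ ∑ t ∈ S with x t ≤ c, f t :=
    Finset.sum_nonneg fun s hs => hf s (Finset.filter_subset _ _ hs)
  obtain h | h := hnonneg.eq_or_lt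
  · rw [fdp, ← h, div_zero, if_neg (lt_irrefl _)]
  · rw [if_pos h, fdp]

lemma fdp_nonneg (hf : ∀ s ∈ S, 0 ≤ f s) (x : E → ℝ) (c : ℝ) : 0 ≤ fdp S f U x c :=
  div_nonneg (Finset.sum_nonneg fun s hs => hf s (Finset.filter_subset _ _ hs))
    (Finset.sum_nonneg fun s hs => hf s (Finset.filter_subset _ _ hs))

lemma fdp_eq_zero_of_forall_lt {x : E → ℝ} {c : ℝ} (h : ∀ s ∈ S, c < x s) :
    fdp S f U x c = 0 := by
  simp [fdp, Finset.filter_false_of_mem fun s hs => not_le.2 (h s hs)]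

/-- Self-consistency turns the denominator, the weight of the rejected points, into a multiple of
the threshold itself. -/
lemma fdp_bhThreshold_eq_sum (hf : ∀ s ∈ S, 0 ≤ f s) (hα : α ∈ Ioc (0 : ℝ) 1) (x : E → ℝ) :
    fdp S f U x (bhThreshold α (ecdf S f x)) =
      ∑ t ∈ S with t ∈ U, α * (f t / ∑ s ∈ S, f s) *
        if x t ≤ bhThreshold α (ecdf S f x) then (bhThreshold α (ecdf S f x))⁻¹ else 0 := by
  set b := bhThreshold α (ecdf S f x)
  set m := ∑ s ∈ S, f s
  have hden : α * ∑ t ∈ S with x t ≤ b, f t = m * b := by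
    have hzero : m = 0 → ∑ t ∈ S with x t ≤ b, f t = 0 := fun h0 =>
      Finset.sum_eq_zero fun s hs =>
        (Finset.sum_eq_zero_iff_of_nonneg hf).1 h0 s (Finset.filter_subset _ _ hs)
    calc α * ∑ t ∈ S with x t ≤ b, f t = m * (α * ecdf S f x b) := by
          rw [mul_left_comm, ecdf, mul_div_cancel_of_imp' hzero]
      _ = m * b := by rw [mul_ecdf_bhThreshold hf hα x]
  rw [fdp, ← mul_div_mul_left _ _ hα.1.ne', hden, ← Finset.filter_filter, Finset.sum_filter,
    Finset.mul_sum, Finset.sum_div]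
  refine Finset.sum_congr rfl fun t _ => ?_
  split_ifs <;> ring

lemma integral_fdp_bhThreshold_le {Ω : Type*} [MeasurableSpace Ω] {P : Measure Ω}
    [IsFiniteMeasure P] {p : Ω → E → ℝ} {T : Set E} (h : IsPRDSOn P p T U) (hS : ↑S ⊆ T)
    (hp : ∀ s ∈ S, Measurable fun ω => p ω s) (hp01 : ∀ ω, ∀ s ∈ S, p ω s ∈ Icc (0 : ℝ) 1)
    (hsuper : ∀ t ∈ U, ∀ u ∈ Icc (0 : ℝ) 1, P {ω | p ω t ≤ u} ≤ ENNReal.ofReal u)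
    (hf : ∀ s ∈ S, 0 ≤ f s) (hα : α ∈ Ioc (0 : ℝ) 1) :
    ∫ ω, fdp S f U (p ω) (bhThreshold α (ecdf S f (p ω))) ∂P ≤
      α * ((∑ s ∈ S with s ∈ U, f s) / ∑ s ∈ S, f s) := by
  have hV := measurable_bhThreshold_ecdf hf hα hp
  have hVR ω := bhThreshold_ecdf_mem_attainableThresholds hf hα (p ω)
  simp only [fdp_bhThreshold_eq_sum hf hα]
  rw [integral_finsetSum _ fun t ht =>
    (integrable_ite_inv (hp t (Finset.filter_subset _ _ ht)) hV hVR).const_mul _,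
    Finset.sum_div, Finset.mul_sum]
  refine Finset.sum_le_sum fun t ht => ?_
  obtain ⟨htS, htU⟩ := Finset.mem_filter.1 ht
  rw [integral_const_mul]
  refine mul_le_of_le_one_right
    (mul_nonneg hα.1.le (div_nonneg (hf t htS) (Finset.sum_nonneg hf)))
    (integral_ite_inv_le_one (hp t htS) hV
      (h.monotone_cond_real_bhThreshold_le hS hp hp01 hf hα htS htU) hVR fun v hv => ?_)
  have hv01 := attainableThresholds_subset_Icc hf hα hv
  exact ENNReal.toReal_le_of_le_ofReal hv01.1 (hsuper t htU v hv01)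

lemma sum_div_card_div_sum_div_card {A B : Finset E} (hA : A ⊆ S) :
    (∑ s ∈ A, f s) / S.card / ((∑ s ∈ B, f s) / S.card) = (∑ s ∈ A, f s) / ∑ s ∈ B, f s := by
  obtain rfl | hS := S.eq_empty_or_nonempty
  · simp [Finset.subset_empty.1 hA]
  · exact div_div_div_cancel_right₀ (Nat.cast_ne_zero.2 hS.card_pos.ne') _ _

end FalseDiscoveryRate

section Limit

variable {E : Type*} [MeasurableSpace E] {ν : Measure E} {T U : Set E} {x : E → ℝ} {α : ℝ}

lemma continuousAt_measureReal_sublevel [IsFiniteMeasure ν] (hx : Measurable x)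
    (hT : MeasurableSet T) {r : ℝ} (hr : ν {t ∈ T | x t = r} = 0) :
    ContinuousAt (fun u => ν.real {t ∈ T | x t ≤ u}) r := by
  have hmeas (u : ℝ) : MeasurableSet {t ∈ T | x t ≤ u} :=
    hT.inter (measurableSet_le hx measurable_const)
  refine (ENNReal.tendsto_toReal (measure_ne_top ν _)).comp
    (tendsto_measure_of_ae_tendsto_indicator_of_isFiniteMeasure _ (hmeas r) hmeas ?_)
  have hne : ∀ᵐ t ∂ν, ¬(t ∈ T ∧ x t = r) := ae_iff.2 (by simpa using hr)
  filter_upwards [hne] with t ht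
  by_cases htT : t ∈ T
  · obtain hlt | hgt := lt_or_gt_of_ne fun h => ht ⟨htT, h⟩
    · filter_upwards [lt_mem_nhds hlt] with u hu
      exact iff_of_true ⟨htT, hu.le⟩ ⟨htT, hlt.le⟩
    · filter_upwards [gt_mem_nhds hgt] with u hu
      exact iff_of_false (fun h => hu.not_ge h.2) fun h => hgt.not_ge h.2
  · exact Eventually.of_forall fun u => iff_of_false (htT ·.1) (htT ·.1)

/-- The normalized cumulated p-value function `a / ν(T)`. -/
noncomputable def measureCDF (ν : Measure E) (T : Set E) (x : E → ℝ) (r : ℝ) : ℝ :=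
  ν.real {t ∈ T | x t ≤ r} / ν.real T

lemma monotone_measureCDF [IsFiniteMeasure ν] : Monotone (measureCDF ν T x) := fun _ _ h =>
  div_le_div_of_nonneg_right (measureReal_mono fun _ ht => ⟨ht.1, ht.2.trans h⟩)
    measureReal_nonneg

lemma measureCDF_mem_Icc [IsFiniteMeasure ν] (r : ℝ) : measureCDF ν T x r ∈ Icc (0 : ℝ) 1 :=
  ⟨div_nonneg measureReal_nonneg measureReal_nonneg,
    div_le_one_of_le₀ (measureReal_mono (sep_subset T _)) measureReal_nonneg⟩

/-- The false discovery proportion, with respect to `ν`, of rejecting the points of `T` whose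
p-value is at most `c`; as for `fdp`, division by zero encodes the empty rejection set. -/
noncomputable def measureFDP (ν : Measure E) (T U : Set E) (x : E → ℝ) (c : ℝ) : ℝ :=
  ν.real (U ∩ {t | x t ≤ c}) / ν.real {t ∈ T | x t ≤ c}

lemma measureFDP_eq_ite (c : ℝ) :
    measureFDP ν T U x c = if 0 < ν {t ∈ T | x t ≤ c}
      then (ν (U ∩ {t | x t ≤ c})).toReal / (ν {t ∈ T | x t ≤ c}).toReal else 0 := by
  obtain h | h := eq_zero_or_pos (ν {t ∈ T | x t ≤ c})
  · rw [measureFDP, measureReal_def ν {t ∈ T | _}, h, ENNReal.toReal_zero, div_zero,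
      if_neg (lt_irrefl _)]
  · rw [if_pos h, measureFDP, measureReal_def, measureReal_def]

/-- The grid approximation assumptions (G1w) and (G2w). -/
structure IsGridApproximation {κ : Type*} (l : Filter κ) (S : κ → Finset E) (f : E → ℝ)
    (ν : Measure E) (T U : Set E) (x : E → ℝ) : Prop where
  tendsto_sum : TendstoUniformlyOn (fun k r => (∑ s ∈ S k with x s ≤ r, f s) / (S k).card)
    (fun r => ν.real {s ∈ T | x s ≤ r}) l (Icc 0 1)
  tendsto_sum_null :
    TendstoUniformlyOn (fun k r => (∑ s ∈ S k with s ∈ U ∧ x s ≤ r, f s) / (S k).card)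
      (fun r => ν.real (U ∩ {s | x s ≤ r})) l (Icc 0 1)

/-- The regularity assumptions (a1)–(a3) on a realized p-value function; of (a2) only the
points where the cumulated p-value function lies above the line are retained. -/
structure IsRegular (ν : Measure E) (T : Set E) (α : ℝ) (x : E → ℝ) : Prop where
  measure_level_eq_zero : ∀ r ∈ Icc (0 : ℝ) 1, ν {t ∈ T | x t = r} = 0
  mem_closure : 0 < bhThreshold α (measureCDF ν T x) →
    bhThreshold α (measureCDF ν T x) ∈ closure {r ∈ Icc (0 : ℝ) 1 | r / α < measureCDF ν T x r}
  exists_pos_le : bhThreshold α (measureCDF ν T x) = 0 → ∃ ε > 0, ∀ t ∈ T, ε ≤ x t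

lemma isRegular_of_isOpen_of_sInf [IsFiniteMeasure ν] (hα : 0 < α) (hx : ∀ t ∈ T, 0 ≤ x t)
    (ha1 : ∀ r ∈ Icc (0 : ℝ) 1, ν {t ∈ T | x t = r} = 0)
    (ha2 : bhThreshold α (measureCDF ν T x) ∈ Ioc 0 α →
      ∀ O, IsOpen O → bhThreshold α (measureCDF ν T x) ∈ O →
        ∃ s ∈ O ∩ Icc (0 : ℝ) 1, s / α < measureCDF ν T x s)
    (ha3 : bhThreshold α (measureCDF ν T x) = 0 → 0 < sInf (x '' T)) : IsRegular ν T α x where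
  measure_level_eq_zero := ha1
  mem_closure hpos := mem_closure_iff.2 fun O hO hmem =>
    have ⟨s, hs, hlt⟩ :=
      ha2 ⟨hpos, bhThreshold_le_level hα fun r => (measureCDF_mem_Icc r).2⟩ O hO hmem
    ⟨s, hs.1, hs.2, hlt⟩
  exists_pos_le h0 := ⟨_, ha3 h0, fun _ ht =>
    csInf_le ⟨0, forall_mem_image.2 hx⟩ (mem_image_of_mem _ ht)⟩

variable {κ : Type*} {l : Filter κ} {S : κ → Finset E} {f : E → ℝ}

namespace IsGridApproximation

lemma tendsto_sum_div_card (h : IsGridApproximation l S f ν T U x) (hS : ∀ k, ↑(S k) ⊆ T)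
    (hx1 : ∀ t ∈ T, x t ≤ 1) :
    Tendsto (fun k => (∑ s ∈ S k, f s) / (S k).card) l (𝓝 (ν.real T)) := by
  have hT : {t ∈ T | x t ≤ 1} = T := sep_eq_self_iff_mem_true.2 hx1
  have hlim := h.tendsto_sum.tendsto_at (right_mem_Icc.2 zero_le_one)
  simpa only [hT, Finset.filter_true_of_mem fun s hs => hx1 s (hS _ hs)] using hlim

lemma tendsto_sum_null_div_card (h : IsGridApproximation l S f ν T U x) (hx1 : ∀ t ∈ U, x t ≤ 1) :
    Tendsto (fun k => (∑ s ∈ S k with s ∈ U, f s) / (S k).card) l (𝓝 (ν.real U)) := by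
  have hU : U ∩ {t | x t ≤ 1} = U := inter_eq_left.2 hx1
  have hlim := h.tendsto_sum_null.tendsto_at (right_mem_Icc.2 zero_le_one)
  simpa only [hU, and_iff_left_of_imp (hx1 _)] using hlim

lemma tendsto_null_fraction (h : IsGridApproximation l S f ν T U x) (hS : ∀ k, ↑(S k) ⊆ T)
    (hx1 : ∀ t ∈ T, x t ≤ 1) (hUT : U ⊆ T) (hνT : ν.real T ≠ 0) :
    Tendsto (fun k => (∑ s ∈ S k with s ∈ U, f s) / ∑ s ∈ S k, f s) l
      (𝓝 (ν.real U / ν.real T)) := by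
  refine ((h.tendsto_sum_null_div_card fun t ht => hx1 t (hUT ht)).div
    (h.tendsto_sum_div_card hS hx1) hνT).congr fun k => ?_
  exact sum_div_card_div_sum_div_card (Finset.filter_subset _ _)

lemma tendsto_ecdf (h : IsGridApproximation l S f ν T U x) (hS : ∀ k, ↑(S k) ⊆ T)
    (hx1 : ∀ t ∈ T, x t ≤ 1) (hνT : ν.real T ≠ 0)
    (hcont : ContinuousOn (fun r => ν.real {t ∈ T | x t ≤ r}) (Icc 0 1)) :
    TendstoLocallyUniformlyOn (fun k => ecdf (S k) f x) (measureCDF ν T x) l (Icc 0 1) := by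
  refine (h.tendsto_sum.tendstoLocallyUniformlyOn.div₀
    ((h.tendsto_sum_div_card hS hx1).tendstoUniformlyOn_const _).tendstoLocallyUniformlyOn
    hcont continuousOn_const fun _ _ => hνT).congr fun k r _ => ?_
  exact sum_div_card_div_sum_div_card (Finset.filter_subset _ _)

lemma tendsto_fdp (h : IsGridApproximation l S f ν T U x) {b : κ → ℝ} {c : ℝ}
    (hb : Tendsto b l (𝓝[Icc 0 1] c)) (hc : c ∈ Icc (0 : ℝ) 1)
    (hT : ContinuousAt (fun r => ν.real {t ∈ T | x t ≤ r}) c)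
    (hU : ContinuousAt (fun r => ν.real (U ∩ {t | x t ≤ r})) c)
    (hpos : ν.real {t ∈ T | x t ≤ c} ≠ 0) :
    Tendsto (fun k => fdp (S k) f U x (b k)) l (𝓝 (measureFDP ν T U x c)) := by
  have hden := h.tendsto_sum.tendstoLocallyUniformlyOn.tendsto_comp hT.continuousWithinAt hc hb
  have hnum := h.tendsto_sum_null.tendstoLocallyUniformlyOn.tendsto_comp hU.continuousWithinAt hc hb
  exact (hnum.div hden hpos).congr fun k =>
    sum_div_card_div_sum_div_card (Finset.filter_subset _ _)

end IsGridApproximation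

lemma measureFDP_eq_zero_of_forall_lt {c : ℝ} (h : ∀ t ∈ T, c < x t) :
    measureFDP ν T U x c = 0 := by
  have hempty : {t ∈ T | x t ≤ c} = ∅ := sep_eq_empty_iff_mem_false.2 fun t ht => not_le.2 (h t ht)
  simp [measureFDP, hempty]

lemma measureReal_sublevel_bhThreshold_pos [IsFiniteMeasure ν] (hα : α ∈ Ioc (0 : ℝ) 1)
    (hpos : 0 < bhThreshold α (measureCDF ν T x)) :
    0 < ν.real {t ∈ T | x t ≤ bhThreshold α (measureCDF ν T x)} := by
  rw [← mul_apply_bhThreshold hα monotone_measureCDF measureCDF_mem_Icc] at hpos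
  refine measureReal_nonneg.lt_of_ne' fun h0 => hpos.ne' ?_
  rw [measureCDF, h0, zero_div, mul_zero]

theorem tendsto_fdp_bhThreshold [IsFiniteMeasure ν] (hα : α ∈ Ioc (0 : ℝ) 1) (hx : Measurable x)
    (hx1 : ∀ t ∈ T, x t ≤ 1) (hT : MeasurableSet T) (hU : MeasurableSet U) (hUT : U ⊆ T)
    (hνT : ν T ≠ 0) (hS : ∀ k, ↑(S k) ⊆ T) (hgrid : IsGridApproximation l S f ν T U x)
    (hreg : IsRegular ν T α x) :
    Tendsto (fun k => fdp (S k) f U x (bhThreshold α (ecdf (S k) f x))) l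
      (𝓝 (measureFDP ν T U x (bhThreshold α (measureCDF ν T x)))) := by
  have hνT' : ν.real T ≠ 0 := (measureReal_ne_zero_iff (measure_ne_top ν T)).2 hνT
  have hcontT : ∀ r ∈ Icc (0 : ℝ) 1, ContinuousAt (fun u => ν.real {t ∈ T | x t ≤ u}) r :=
    fun r hr => continuousAt_measureReal_sublevel hx hT (hreg.measure_level_eq_zero r hr)
  have hcontU : ∀ r ∈ Icc (0 : ℝ) 1, ContinuousAt (fun u => ν.real {t ∈ U | x t ≤ u}) r :=
    fun r hr => continuousAt_measureReal_sublevel hx hU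
      (measure_mono_null (inter_subset_inter_left _ hUT) (hreg.measure_level_eq_zero r hr))
  have hcontOn : ContinuousOn (fun u => ν.real {t ∈ T | x t ≤ u}) (Icc 0 1) :=
    fun r hr => (hcontT r hr).continuousWithinAt
  have hecdf := hgrid.tendsto_ecdf hS hx1 hνT' hcontOn
  have hcdf : ContinuousOn (measureCDF ν T x) (Icc 0 1) := hcontOn.div_const _
  obtain hzero | hpos := bhThreshold_nonneg.eq_or_lt' (a := bhThreshold α (measureCDF ν T x))
  · obtain ⟨ε, hε, hεx⟩ := hreg.exists_pos_le hzero
    rw [measureFDP_eq_zero_of_forall_lt fun t ht => hzero ▸ hε.trans_le (hεx t ht)]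
    obtain ⟨δ, hδ, hδε⟩ := exists_between hε
    refine tendsto_const_nhds.congr' ?_
    filter_upwards [eventually_bhThreshold_le hcdf hecdf (hzero ▸ hδ)] with k hk
    exact (fdp_eq_zero_of_forall_lt fun s hs =>
      (hk.trans_lt hδε).trans_le (hεx s (hS k hs))).symm
  · have hb := tendsto_bhThreshold hcdf hecdf (hreg.mem_closure hpos)
    exact hgrid.tendsto_fdp
      (tendsto_nhdsWithin_iff.2 ⟨hb, Eventually.of_forall fun _ => bhThreshold_mem_Icc⟩)
      bhThreshold_mem_Icc (hcontT _ bhThreshold_mem_Icc) (hcontU _ bhThreshold_mem_Icc)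
      (measureReal_sublevel_bhThreshold_pos hα hpos).ne'

end Limit

section WeightedMeasure

variable {E : Type*} [MeasurableSpace E] {μ : Measure E} {T : Set E} {f : E → ℝ}

lemma isFiniteMeasure_withDensity_ofReal_of_le (hμT : μ T ≠ ⊤) {C : ℝ}
    (hfC : ∀ t ∈ T, f t ≤ C) :
    IsFiniteMeasure ((μ.restrict T).withDensity fun t => ENNReal.ofReal (f t)) :=
  isFiniteMeasure_withDensity (setLIntegral_lt_top_of_le_nnreal hμT
    ⟨C.toNNReal, fun t ht => ENNReal.ofReal_le_ofReal (hfC t ht)⟩).ne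

lemma withDensity_ofReal_apply_ne_zero (hμT : μ T ≠ 0) (hf : Measurable f)
    (hfpos : ∀ t ∈ T, 0 < f t) :
    (μ.restrict T).withDensity (fun t => ENNReal.ofReal (f t)) T ≠ 0 := by
  have hsupp : {t | ENNReal.ofReal (f t) ≠ 0} ∩ T = T :=
    inter_eq_right.2 fun t ht => (ENNReal.ofReal_pos.2 (hfpos t ht)).ne'
  rwa [Ne, withDensity_apply_eq_zero hf.ennreal_ofReal, hsupp, Measure.restrict_apply_self]

end WeightedMeasure

lemma limsup_integral_fdp_bhThreshold_le {E Ω κ : Type*} [MeasurableSpace Ω] {P : Measure Ω}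
    [IsFiniteMeasure P] {p : Ω → E → ℝ} {T U : Set E} (hPRDS : IsPRDSOn P p T U)
    (hp : ∀ t ∈ T, Measurable fun ω => p ω t) (hp01 : ∀ ω, ∀ t ∈ T, p ω t ∈ Icc (0 : ℝ) 1)
    (hsuper : ∀ t ∈ U, ∀ u ∈ Icc (0 : ℝ) 1, P {ω | p ω t ≤ u} ≤ ENNReal.ofReal u)
    {f : E → ℝ} (hf : ∀ t ∈ T, 0 ≤ f t) {α : ℝ} (hα : α ∈ Ioc (0 : ℝ) 1) {l : Filter κ} [l.NeBot]
    {S : κ → Finset E} (hS : ∀ k, ↑(S k) ⊆ T) {q : ℝ}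
    (hq : Tendsto (fun k => (∑ s ∈ S k with s ∈ U, f s) / ∑ s ∈ S k, f s) l (𝓝 q)) :
    limsup (fun k => ∫ ω, fdp (S k) f U (p ω) (bhThreshold α (ecdf (S k) f (p ω))) ∂P) l ≤
      α * q := by
  have hf' (k : κ) : ∀ s ∈ S k, 0 ≤ f s := fun s hs => hf s (hS k hs)
  have hbound (k : κ) := integral_fdp_bhThreshold_le hPRDS (hS k) (fun s hs => hp s (hS k hs))
    (fun ω s hs => hp01 ω s (hS k hs)) hsuper (hf' k) hα
  have hnonneg : ∀ k, 0 ≤ ∫ ω, fdp (S k) f U (p ω) (bhThreshold α (ecdf (S k) f (p ω))) ∂P :=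
    fun k => integral_nonneg fun ω => fdp_nonneg (hf' k) _ _
  rw [← (hq.const_mul α).limsup_eq]
  exact limsup_le_limsup (Eventually.of_forall hbound)
    (isBoundedUnder_of ⟨0, hnonneg⟩ : IsBoundedUnder (· ≥ ·) l _).isCoboundedUnder_le
    (hq.const_mul α).isBoundedUnder_le

end FBH

open FBH in
theorem fBH_weighted_fdp_tendsto_ae_and_limsup_control_general {E : Type*} [MeasurableSpace E]
    {ν : Measure E} [IsFiniteMeasure ν] {T U : Set E} (hT : MeasurableSet T)
    (hU : MeasurableSet U) (hUT : U ⊆ T) (hνT : ν T ≠ 0) {f : E → ℝ} (hf : ∀ t ∈ T, 0 ≤ f t)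
    {α : ℝ} (hα : α ∈ Ioc (0 : ℝ) 1) {Ω : Type*} [MeasurableSpace Ω] {P : Measure Ω}
    [IsProbabilityMeasure P] {p : Ω → E → ℝ} (hp : ∀ t ∈ T, Measurable fun ω => p ω t)
    (hp' : ∀ ω, Measurable (p ω)) (hp01 : ∀ ω, ∀ t ∈ T, p ω t ∈ Icc (0 : ℝ) 1)
    {κ : Type*} {l : Filter κ} [l.NeBot] {S : κ → Finset E} (hS : ∀ k, ↑(S k) ⊆ T)
    (hae : ∀ᵐ ω ∂P, IsGridApproximation l S f ν T U (p ω) ∧ IsRegular ν T α (p ω))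
    (hPRDS : IsPRDSOn P p T U)
    (hsuper : ∀ t ∈ U, ∀ u ∈ Icc (0 : ℝ) 1, P {ω | p ω t ≤ u} ≤ ENNReal.ofReal u) :
    (∀ᵐ ω ∂P, Tendsto (fun k => fdp (S k) f U (p ω) (bhThreshold α (ecdf (S k) f (p ω)))) l
      (nhds (measureFDP ν T U (p ω) (bhThreshold α (measureCDF ν T (p ω)))))) ∧
    limsup (fun k => ∫ ω, fdp (S k) f U (p ω) (bhThreshold α (ecdf (S k) f (p ω))) ∂P) l ≤
      α * (ν.real U / ν.real T) ∧
    α * (ν.real U / ν.real T) ≤ α := by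
  have hp1 (ω : Ω) : ∀ t ∈ T, p ω t ≤ 1 := fun t ht => (hp01 ω t ht).2
  refine ⟨?_, ?_, ?_⟩
  · filter_upwards [hae] with ω ⟨hgrid, hreg⟩
    exact tendsto_fdp_bhThreshold hα (hp' ω) (hp1 ω) hT hU hUT hνT hS hgrid hreg
  · obtain ⟨ω, hgrid, -⟩ := hae.exists
    exact limsup_integral_fdp_bhThreshold_le hPRDS hp hp01 hsuper hf hα hS
      (hgrid.tendsto_null_fraction hS (hp1 ω) hUT
        ((measureReal_ne_zero_iff (measure_ne_top ν T)).2 hνT))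
  · exact mul_le_of_le_one_right hα.1.le
      (div_le_one_of_le₀ (measureReal_mono hUT) measureReal_nonneg)

/-- if almost surely the realized p-value function `p_ω` satisfies (G1w), (G2w)
and (a1)–(a3), the process `(p(·,t))_{t∈T}` is PRDS on `U`, and the null p-values are
superuniform, then the weighted step-`k` false discovery proportions converge almost surely to
the limiting false discovery proportion, `Q_k → Q`, and
`limsup_k E[Q_k] ≤ α·ν(U)/ν(T) ≤ α`. -/
theorem fBH_weighted_fdp_tendsto_ae_and_limsup_control {d : ℕ}
    (T : Set (EuclideanSpace ℝ (Fin d)))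
    (hT_open : IsOpen T) (hT_bdd : Bornology.IsBounded T) (hT_ne : T.Nonempty)
    (hT_norm : volume T = 1)
    -- weight function and weighted measure ν = f·μ
    (f : EuclideanSpace ℝ (Fin d) → ℝ) (hf_meas : Measurable f)
    (hf_pos : ∀ t ∈ T, 0 < f t) (hf_bdd : ∃ C : ℝ, ∀ t ∈ T, f t ≤ C)
    (ν : Measure (EuclideanSpace ℝ (Fin d)))
    (hν : ν = (volume.restrict T).withDensity (fun x => ENNReal.ofReal (f x)))
    (U : Set (EuclideanSpace ℝ (Fin d))) (hU_sub : U ⊆ T) (hU_meas : MeasurableSet U)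
    (α : ℝ) (hα : α ∈ Set.Ioo (0:ℝ) 1)
    {Ω : Type*} [MeasurableSpace Ω] (P : Measure Ω) [IsProbabilityMeasure P]
    -- the random p-value function
    (p : Ω → EuclideanSpace ℝ (Fin d) → ℝ)
    (hp_meas : ∀ t, Measurable (fun ω => p ω t))
    (hp_meas' : ∀ ω, Measurable (p ω))
    (hp_val : ∀ ω, ∀ t ∈ T, p ω t ∈ Set.Icc (0:ℝ) 1)
    -- realized cumulated p-value functions and adjusted thresholds
    (a : Ω → ℝ → ℝ) (ha : ∀ ω r, a ω r = (ν {s ∈ T | p ω s ≤ r}).toReal)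
    (αStar : Ω → ℝ)
    (hαStar : ∀ ω, αStar ω = sSup {r ∈ Set.Icc (0:ℝ) 1 | r / α ≤ a ω r / (ν T).toReal})
    -- nested grids and weighted empirical quantities
    (S : ℕ → Finset (EuclideanSpace ℝ (Fin d)))
    (hS_ne : ∀ k, (S k).Nonempty) (hS_sub : ∀ k, ↑(S k) ⊆ T)
    (hS_mono : ∀ k, S k ⊆ S (k + 1))
    (ak : Ω → ℕ → ℝ → ℝ)
    (hak : ∀ ω k r, ak ω k r =
      (∑ s ∈ (S k).filter (fun s => p ω s ≤ r), f s) / ∑ s ∈ S k, f s)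
    (b : Ω → ℕ → ℝ)
    (hb : ∀ ω k, b ω k = sSup {r ∈ Set.Icc (0:ℝ) 1 | r / α ≤ ak ω k r})
    -- weighted step-k false discovery proportions
    (Qk : ℕ → Ω → ℝ)
    (hQk : ∀ k ω, Qk k ω = if 0 < ∑ t ∈ (S k).filter (fun t => p ω t ≤ b ω k), f t
      then (∑ t ∈ (S k).filter (fun t => t ∈ U ∧ p ω t ≤ b ω k), f t) /
        ∑ t ∈ (S k).filter (fun t => p ω t ≤ b ω k), f t
      else 0)
    -- limiting false discovery proportion
    (Q : Ω → ℝ)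
    (hQ : ∀ ω, Q ω = if 0 < ν {t ∈ T | p ω t ≤ αStar ω}
      then (ν (U ∩ {t | p ω t ≤ αStar ω})).toReal / (ν {t ∈ T | p ω t ≤ αStar ω}).toReal
      else 0)
    -- almost surely (G1w), (G2w) and (a1)–(a3) hold for the realized p-value function
    (hae : ∀ᵐ ω ∂P,
      TendstoUniformlyOn
        (fun k r => (∑ s ∈ (S k).filter (fun s => p ω s ≤ r), f s) / (S k).card)
        (fun r => (ν {s ∈ T | p ω s ≤ r}).toReal) atTop (Set.Icc 0 1) ∧
      TendstoUniformlyOn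
        (fun k r => (∑ s ∈ (S k).filter (fun s => s ∈ U ∧ p ω s ≤ r), f s) / (S k).card)
        (fun r => (ν (U ∩ {s | p ω s ≤ r})).toReal) atTop (Set.Icc 0 1) ∧
      (∀ t ∈ Set.Icc (0:ℝ) 1, ν {s ∈ T | p ω s = t} = 0) ∧
      (αStar ω ∈ Set.Ioc 0 α → ∀ O : Set ℝ, IsOpen O → αStar ω ∈ O →
        ∃ s₁ ∈ O ∩ Set.Icc (0:ℝ) 1, ∃ s₂ ∈ O ∩ Set.Icc (0:ℝ) 1,
          s₁ / α < a ω s₁ / (ν T).toReal ∧ a ω s₂ / (ν T).toReal < s₂ / α) ∧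
      (αStar ω = 0 → 0 < sInf (p ω '' T)))
    -- the process is PRDS on U
    (hPRDS : ∀ (l : ℕ) (t : Fin l → EuclideanSpace ℝ (Fin d)), (∀ j, t j ∈ T) →
      ∀ j : Fin l, t j ∈ U →
      ∀ D : Set (Fin l → ℝ), MeasurableSet D →
      (∀ x y : Fin l → ℝ, x ∈ D → x ≤ y → y ∈ D) →
      ∃ g : ℝ → ℝ, MonotoneOn g (Set.Icc 0 1) ∧
        (fun ω => g (p ω (t j))) =ᵐ[P]
          P[(fun ω => D.indicator (fun _ => (1:ℝ)) (fun i => p ω (t i))) |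
            MeasurableSpace.comap (fun ω => p ω (t j)) (inferInstance : MeasurableSpace ℝ)])
    -- superuniformity of the null p-values
    (hsuper : ∀ t ∈ U, ∀ x ∈ Set.Icc (0:ℝ) 1,
      P {ω | p ω t ≤ x} ≤ ENNReal.ofReal x) :
    (∀ᵐ ω ∂P, Tendsto (fun k => Qk k ω) atTop (nhds (Q ω))) ∧
    limsup (fun k => ∫ ω, Qk k ω ∂P) atTop ≤ α * (ν U).toReal / (ν T).toReal ∧
    α * (ν U).toReal / (ν T).toReal ≤ α := by
  obtain ⟨C, hC⟩ := hf_bdd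
  have hνfin : IsFiniteMeasure ν :=
    hν ▸ FBH.isFiniteMeasure_withDensity_ofReal_of_le (by simp [hT_norm]) hC
  have hνT : ν T ≠ 0 :=
    hν ▸ FBH.withDensity_ofReal_apply_ne_zero (by simp [hT_norm]) hf_meas hf_pos
  have hf_nonneg : ∀ t ∈ T, 0 ≤ f t := fun t ht => (hf_pos t ht).le
  obtain rfl : a = fun ω r => (ν {s ∈ T | p ω s ≤ r}).toReal := by ext; apply ha
  obtain rfl : αStar = fun ω => FBH.bhThreshold α (FBH.measureCDF ν T (p ω)) := funext hαStar
  obtain rfl : ak = fun ω k => FBH.ecdf (S k) f (p ω) := by ext; apply hak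
  obtain rfl : b = fun ω k => FBH.bhThreshold α (FBH.ecdf (S k) f (p ω)) := by ext; apply hb
  simp only [hQk, hQ, mul_div_assoc, ← FBH.measureFDP_eq_ite,
    ← FBH.fdp_eq_ite fun s hs => hf_nonneg s (hS_sub _ hs)]
  refine fBH_weighted_fdp_tendsto_ae_and_limsup_control_general hT_open.measurableSet hU_meas
    hU_sub hνT hf_nonneg (Ioo_subset_Ioc_self hα) (fun t _ => hp_meas t) hp_meas' hp_val hS_sub
    ?_ ?_ hsuper
  · filter_upwards [hae] with ω ⟨hG1, hG2, ha1, ha2, ha3⟩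
    refine ⟨⟨hG1, hG2⟩, FBH.isRegular_of_isOpen_of_sInf hα.1 (fun t ht => (hp_val ω t ht).1) ha1
      (fun h O hO hmem => ?_) ha3⟩
    obtain ⟨s, hs, -, -, hlt, -⟩ := ha2 h O hO hmem
    exact ⟨s, hs, hlt⟩
  · exact fun l t ht j hj D hD hup => hPRDS l t ht j hj D hD fun x y hx hxy => hup hxy hx
end

section
/- Suppose there exist nonempty finite nested grids S_1 ⊆ S_2 ⊆ ⋯ ⊆ T such that almost surely the realized p-value function p_ω satisfies (G1w) and (G2w); that almost surely p_ω satisfies (a1)–(a3); that the process (p(·,t))_{t∈T} is PRDS on U; that P(p(·,t) ≤ x) ≤ x for every t ∈ U and x ∈ [0,1]; and that ω ↦ Q(ω) is measurable. Then the functional Benjamini–Hochberg procedure at level α controls the functional false discovery rate: E[Q] ≤ α·ν(U)/ν(T) ≤ α. -/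
open Filter Set MeasureTheory
open scoped Classical

/-!
On a finite grid the weighted Benjamini–Hochberg procedure rejects the largest self-consistent set,
whose weight `ρ` decreases when the p-values increase. The false discovery proportion is
`∑ i ∈ N, w i * 1{x i ≤ β ρ} / ρ`, and PRDS makes the law of `ρ` given `x i ≤ u` stochastically
decreasing in `u`, so each expectation `E[1{x i ≤ β ρ} / ρ]` is at most `β` (Blanchard–Roquain) and
the false discovery rate on the grid is at most `β * w(N)`.

Along the grids, the cumulated p-value functions converge uniformly to their continuous limits.
Uniform convergence alone bounds the grid thresholds from above in the limit; if the limit threshold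
is positive, the crossing condition (a2) also bounds them from below, so that the grid false
discovery proportions converge to the functional one. If it is zero, (a3) places every p-value
eventually above the grid threshold, and both proportions vanish. Dominated convergence transfers
the bound.
-/

open ProbabilityTheory
open scoped Topology

/-! ### Step-up thresholds -/

/-- The threshold of a step-up procedure: the last point of `[0, 1]` at which `F` has not yet
fallen below the diagonal. The Benjamini–Hochberg threshold is the case where `F` is a multiple of
the cumulated p-value function. -/
noncomputable def stepUpThreshold (F : ℝ → ℝ) : ℝ :=
  sSup {r ∈ Icc (0 : ℝ) 1 | r ≤ F r}

section StepUp

variable {F : ℝ → ℝ} {κ : Type*} {l : Filter κ} {G : κ → ℝ → ℝ} {r : κ → ℝ} {b : ℝ}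

theorem bddAbove_setOf_le_apply (F : ℝ → ℝ) : BddAbove {r ∈ Icc (0 : ℝ) 1 | r ≤ F r} :=
  ⟨1, fun _ hr => hr.1.2⟩

theorem stepUpThreshold_nonneg (F : ℝ → ℝ) : 0 ≤ stepUpThreshold F :=
  Real.sSup_nonneg fun _ hr => hr.1.1

theorem apply_lt_of_stepUpThreshold_lt (hb : b ∈ Icc (0 : ℝ) 1) (h : stepUpThreshold F < b) :
    F b < b := by
  by_contra! hF
  exact h.not_ge (le_csSup (bddAbove_setOf_le_apply F) ⟨hb, hF⟩)

theorem stepUpThreshold_mem (hF : ContinuousOn F (Icc 0 1)) (h0 : 0 ≤ F 0) :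
    stepUpThreshold F ∈ {r ∈ Icc (0 : ℝ) 1 | r ≤ F r} :=
  (isClosed_Icc.isClosed_le continuousOn_id hF).csSup_mem
    ⟨0, ⟨le_rfl, zero_le_one⟩, h0⟩ (bddAbove_setOf_le_apply F)

theorem eventually_lt_of_stepUpThreshold_lt (hF : ContinuousOn F (Icc 0 1))
    (hG : TendstoUniformlyOn G F l (Icc 0 1))
    (hr : ∀ k, r k ∈ {x ∈ Icc (0 : ℝ) 1 | x ≤ G k x}) (hb : stepUpThreshold F < b) :
    ∀ᶠ k in l, r k < b := by
  have hsub : Icc b 1 ⊆ Icc 0 1 := Icc_subset_Icc_left ((stepUpThreshold_nonneg F).trans hb.le)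
  obtain ⟨δ, hδ, hgap⟩ : ∃ δ, 0 < δ ∧ ∀ x ∈ Icc b 1, δ ≤ x - F x :=
    isCompact_Icc.exists_forall_le' (continuousOn_id.sub (hF.mono hsub)) fun x hx =>
      sub_pos.2 (apply_lt_of_stepUpThreshold_lt (hsub hx) (hb.trans_le hx.1))
  filter_upwards [Metric.tendstoUniformlyOn_iff.1 hG δ hδ] with k hk
  by_contra! hbr
  have hclose := (abs_lt.1 (hk (r k) (hr k).1)).1
  linarith [hgap (r k) ⟨hbr, (hr k).1.2⟩, (hr k).2]

theorem tendsto_stepUpThreshold (hF : ContinuousOn F (Icc 0 1))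
    (hG : TendstoUniformlyOn G F l (Icc 0 1))
    (hr : ∀ k, IsGreatest {x ∈ Icc (0 : ℝ) 1 | x ≤ G k x} (r k))
    (hcross : ∃ᶠ x in 𝓝 (stepUpThreshold F), x ∈ Icc (0 : ℝ) 1 ∧ x < F x) :
    Tendsto r l (𝓝 (stepUpThreshold F)) := by
  refine tendsto_order.2 ⟨fun b hb => ?_, fun b hb =>
    eventually_lt_of_stepUpThreshold_lt hF hG (fun k => (hr k).1) hb⟩
  obtain ⟨x, ⟨hx, hxF⟩, hbx⟩ := (hcross.and_eventually (lt_mem_nhds hb)).exists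
  filter_upwards [(hG.tendsto_at hx).eventually_const_lt hxF] with k hk
  exact hbx.trans_le ((hr k).2 ⟨hx, hk.le⟩)

end StepUp

/-! ### The weighted step-up procedure for finitely many p-values -/

section Weighted

variable {ι : Type*}

/-- The finite counterpart of the cumulated p-value function: the weight of the indices in `N`
whose p-value `x i` is at most `r`. -/
noncomputable def cumulatedWeight (w : ι → ℝ) (N : Finset ι) (x : ι → ℝ) (r : ℝ) : ℝ :=
  ∑ i ∈ N with x i ≤ r, w i

variable {w : ι → ℝ} {N : Finset ι} {β r : ℝ} {x : ι → ℝ}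

theorem cumulatedWeight_of_forall_le (h : ∀ i ∈ N, x i ≤ r) :
    cumulatedWeight w N x r = ∑ i ∈ N, w i := by
  rw [cumulatedWeight, Finset.filter_true_of_mem h]

theorem cumulatedWeight_nonneg (hw : 0 ≤ w) : 0 ≤ cumulatedWeight w N x r :=
  Finset.sum_nonneg fun i _ => hw i

theorem cumulatedWeight_mono_left {M : Finset ι} (hw : 0 ≤ w) (hNM : N ⊆ M) :
    cumulatedWeight w N x r ≤ cumulatedWeight w M x r :=
  Finset.sum_le_sum_of_subset_of_nonneg (Finset.filter_subset_filter _ hNM) fun i _ _ => hw i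

/-- A rejection set `A` is self-consistent (Blanchard–Roquain) when all its p-values lie below the
threshold `β * w(A)` that its own weight entitles it to. -/
def SelfConsistent (w : ι → ℝ) (β : ℝ) (x : ι → ℝ) (A : Finset ι) : Prop :=
  ∀ i ∈ A, x i ≤ β * ∑ j ∈ A, w j

theorem selfConsistent_empty (w : ι → ℝ) (β : ℝ) (x : ι → ℝ) : SelfConsistent w β x ∅ := by
  simp [SelfConsistent]

variable [Fintype ι]

theorem filter_selfConsistent_nonempty (w : ι → ℝ) (β : ℝ) (x : ι → ℝ) :
    (Finset.univ.filter (SelfConsistent w β x)).Nonempty :=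
  ⟨∅, by simpa using selfConsistent_empty w β x⟩

/-- The weight rejected by the weighted Benjamini–Hochberg procedure with slope `β`, encoded as the
largest weight of a self-consistent set; the procedure rejects below
`β * rejectedWeight w β x`. -/
noncomputable def rejectedWeight (w : ι → ℝ) (β : ℝ) (x : ι → ℝ) : ℝ :=
  (Finset.univ.filter (SelfConsistent w β x)).sup' (filter_selfConsistent_nonempty w β x)
    fun A => ∑ i ∈ A, w i

/-- The weighted false discovery proportion of the procedure, where `N` is the set of true null
indices. It is `0` when nothing is rejected, by the convention `y / 0 = 0`. -/
noncomputable def weightedFDP (w : ι → ℝ) (N : Finset ι) (β : ℝ) (x : ι → ℝ) : ℝ :=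
  cumulatedWeight w N x (β * rejectedWeight w β x) / rejectedWeight w β x

theorem SelfConsistent.sum_le_rejectedWeight {A : Finset ι} (hA : SelfConsistent w β x A) :
    ∑ i ∈ A, w i ≤ rejectedWeight w β x :=
  Finset.le_sup' (fun A => ∑ i ∈ A, w i) (by simpa using hA)

theorem exists_selfConsistent_sum_eq (w : ι → ℝ) (β : ℝ) (x : ι → ℝ) :
    ∃ A, SelfConsistent w β x A ∧ ∑ i ∈ A, w i = rejectedWeight w β x := by
  obtain ⟨A, hA, h⟩ := Finset.exists_mem_eq_sup' (filter_selfConsistent_nonempty w β x)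
    fun A => ∑ i ∈ A, w i
  exact ⟨A, (Finset.mem_filter.1 hA).2, h.symm⟩

theorem rejectedWeight_nonneg (w : ι → ℝ) (β : ℝ) (x : ι → ℝ) : 0 ≤ rejectedWeight w β x := by
  simpa using (selfConsistent_empty w β x).sum_le_rejectedWeight

theorem rejectedWeight_le_sum (hw : 0 ≤ w) : rejectedWeight w β x ≤ ∑ i, w i :=
  Finset.sup'_le _ _ fun A _ =>
    Finset.sum_le_sum_of_subset_of_nonneg A.subset_univ fun i _ _ => hw i

theorem rejectedWeight_antitone (w : ι → ℝ) (β : ℝ) : Antitone (rejectedWeight w β) :=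
  fun _ _ hxy => Finset.sup'_mono _
    (Finset.monotone_filter_right _ fun _ _ hA i hi => (hxy i).trans (hA i hi)) _

theorem measurable_rejectedWeight (w : ι → ℝ) (β : ℝ) : Measurable (rejectedWeight w β) := by
  refine measurable_of_Iic fun m => ?_
  have hpre : rejectedWeight w β ⁻¹' Iic m =
      {x | ∀ A : Finset ι, (∀ i ∈ A, x i ≤ β * ∑ j ∈ A, w j) → ∑ i ∈ A, w i ≤ m} := by
    ext x
    simp [rejectedWeight, SelfConsistent]
  rw [hpre]
  measurability

theorem cumulatedWeight_mul_rejectedWeight (hw : 0 ≤ w) (hβ : 0 ≤ β) :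
    cumulatedWeight w Finset.univ x (β * rejectedWeight w β x) = rejectedWeight w β x := by
  obtain ⟨A, hA, hsum⟩ := exists_selfConsistent_sum_eq w β x
  have hle : rejectedWeight w β x ≤
      cumulatedWeight w Finset.univ x (β * rejectedWeight w β x) := by
    rw [← hsum]
    exact Finset.sum_le_sum_of_subset_of_nonneg (fun i hi => by simpa using hA i hi)
      fun i _ _ => hw i
  refine le_antisymm (SelfConsistent.sum_le_rejectedWeight fun i hi => ?_) hle
  exact (Finset.mem_filter.1 hi).2.trans (mul_le_mul_of_nonneg_left hle hβ)

theorem isGreatest_mul_rejectedWeight (hw : 0 ≤ w) (hβ : 0 ≤ β) (hβw : β * ∑ i, w i ≤ 1) :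
    IsGreatest {r ∈ Icc (0 : ℝ) 1 | r ≤ β * cumulatedWeight w Finset.univ x r}
      (β * rejectedWeight w β x) := by
  refine ⟨⟨⟨mul_nonneg hβ (rejectedWeight_nonneg w β x),
    (mul_le_mul_of_nonneg_left (rejectedWeight_le_sum hw) hβ).trans hβw⟩, ?_⟩, fun r hr => ?_⟩
  · rw [cumulatedWeight_mul_rejectedWeight hw hβ]
  · refine hr.2.trans (mul_le_mul_of_nonneg_left (SelfConsistent.sum_le_rejectedWeight ?_) hβ)
    exact fun i hi => (Finset.mem_filter.1 hi).2.trans hr.2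

theorem weightedFDP_mem_Icc (hw : 0 ≤ w) (hβ : 0 ≤ β) : weightedFDP w N β x ∈ Icc (0 : ℝ) 1 := by
  have hρ := rejectedWeight_nonneg w β x
  refine ⟨div_nonneg (cumulatedWeight_nonneg hw) hρ, div_le_one_of_le₀ ?_ hρ⟩
  exact (cumulatedWeight_mono_left hw N.subset_univ).trans_eq
    (cumulatedWeight_mul_rejectedWeight hw hβ)

theorem weightedFDP_eq_zero (h : ∀ i ∈ N, β * rejectedWeight w β x < x i) :
    weightedFDP w N β x = 0 := by
  rw [weightedFDP, cumulatedWeight, Finset.filter_false_of_mem fun i hi => (h i hi).not_ge,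
    Finset.sum_empty, zero_div]

theorem weightedFDP_eq_sum_indicator (w : ι → ℝ) (N : Finset ι) (β : ℝ) (x : ι → ℝ) :
    weightedFDP w N β x = ∑ i ∈ N, w i *
      {y : ι → ℝ | y i ≤ β * rejectedWeight w β y}.indicator (fun y => (rejectedWeight w β y)⁻¹)
        x := by
  simp only [weightedFDP, cumulatedWeight, Finset.sum_filter, div_eq_mul_inv, Finset.sum_mul,
    ite_mul, zero_mul, indicator_apply, mem_ofPred_eq, mul_ite, mul_zero]

theorem measurable_weightedFDP (w : ι → ℝ) (N : Finset ι) (β : ℝ) :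
    Measurable (weightedFDP w N β) := by
  have hρ := measurable_rejectedWeight w β
  rw [funext (weightedFDP_eq_sum_indicator w N β)]
  exact Finset.measurable_sum _ fun i _ => (hρ.inv.indicator
    (measurableSet_le (measurable_pi_apply i) (hρ.const_mul β))).const_mul _

end Weighted

/-! ### The Blanchard–Roquain inequality -/

section BlanchardRoquain

variable {Ω : Type*} {X ρ : Ω → ℝ} {β : ℝ} {L : Finset ℝ}

theorem indicator_inv_eq_sum (hL : ∀ ω, ρ ω ∈ L) :
    ({ω | X ω ≤ β * ρ ω}.indicator fun ω => (ρ ω)⁻¹) =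
      fun ω => ∑ c ∈ L, (X ⁻¹' Iic (β * c) ∩ ρ ⁻¹' {c}).indicator (fun _ => c⁻¹) ω := by
  ext ω
  rw [Finset.sum_eq_single_of_mem _ (hL ω) fun c _ hc =>
    indicator_of_notMem (fun h => hc h.2.symm) _]
  simp [indicator_apply]

variable [MeasurableSpace Ω]

theorem sum_measureReal_eq_le {κ : ℝ → Measure Ω} [∀ c, IsFiniteMeasure (κ c)]
    (hρ : Measurable ρ) (hκ : ∀ m, Monotone fun c => (κ c).real (ρ ⁻¹' Iic m)) (L : Finset ℝ) :
    ∀ M, (∀ c ∈ L, c < M) → ∑ c ∈ L, (κ c).real (ρ ⁻¹' {c}) ≤ (κ M).real (ρ ⁻¹' Iio M) := by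
  refine L.induction_on_max (by simp) fun m L hL ih M hM => ?_
  have hmM : m < M := hM m (Finset.mem_insert_self m L)
  have hsplit : ρ ⁻¹' Iic m = ρ ⁻¹' {m} ∪ ρ ⁻¹' Iio m := by
    rw [← preimage_union, union_comm, ← Iio_insert, insert_eq, union_comm]
  have hdisj : Disjoint (ρ ⁻¹' {m}) (ρ ⁻¹' Iio m) := Disjoint.preimage ρ (by simp)
  calc ∑ c ∈ insert m L, (κ c).real (ρ ⁻¹' {c})
      = (κ m).real (ρ ⁻¹' {m}) + ∑ c ∈ L, (κ c).real (ρ ⁻¹' {c}) :=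
        Finset.sum_insert fun h => (hL m h).false
    _ ≤ (κ m).real (ρ ⁻¹' {m}) + (κ m).real (ρ ⁻¹' Iio m) := by gcongr; exact ih m hL
    _ = (κ m).real (ρ ⁻¹' Iic m) := by rw [hsplit, measureReal_union hdisj (hρ measurableSet_Iio)]
    _ ≤ (κ M).real (ρ ⁻¹' Iic m) := hκ m hmM.le
    _ ≤ (κ M).real (ρ ⁻¹' Iio M) := measureReal_mono (preimage_mono (Iic_subset_Iio.2 hmM))

theorem cond_real_apply (P : Measure Ω) {s : Set Ω} (hs : MeasurableSet s) (t : Set Ω) :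
    P[|s].real t = P.real (s ∩ t) / P.real s := by
  rw [measureReal_def, cond_apply hs, ENNReal.toReal_mul, ENNReal.toReal_inv, div_eq_inv_mul]
  rfl

variable {P : Measure Ω} [IsFiniteMeasure P]

theorem integrable_indicator_inv (hX : Measurable X) (hρ : Measurable ρ) (hL : ∀ ω, ρ ω ∈ L) :
    Integrable ({ω | X ω ≤ β * ρ ω}.indicator fun ω => (ρ ω)⁻¹) P := by
  rw [indicator_inv_eq_sum hL]
  exact integrable_finsetSum _ fun c _ => (integrable_const _).indicator
    ((hX measurableSet_Iic).inter (hρ (measurableSet_singleton c)))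

/-- Here `E[1{X ≤ β ρ} / ρ] = ∑ c, (P(X ≤ β c) / c) * P(ρ = c | X ≤ β c)`. Each `P(X ≤ β c) / c` is
at most `β`, and since the conditional law of `ρ` decreases stochastically as `c` grows, the
remaining probabilities telescope to at most `1`. -/
theorem integral_indicator_inv_le (hX : Measurable X) (hρ : Measurable ρ) (hL : ∀ ω, ρ ω ∈ L)
    (hL0 : ∀ c ∈ L, 0 ≤ c) (hβ : 0 ≤ β) (hsuper : ∀ c ∈ L, P.real (X ⁻¹' Iic (β * c)) ≤ β * c)
    (hmono : ∀ m, Monotone fun u => P[|X ⁻¹' Iic u].real (ρ ⁻¹' Iic m)) :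
    ∫ ω, {ω | X ω ≤ β * ρ ω}.indicator (fun ω => (ρ ω)⁻¹) ω ∂P ≤ β := by
  have hmeas : ∀ c, MeasurableSet (X ⁻¹' Iic (β * c) ∩ ρ ⁻¹' {c}) := fun c =>
    (hX measurableSet_Iic).inter (hρ (measurableSet_singleton c))
  have hterm : ∀ c ∈ L, P.real (X ⁻¹' Iic (β * c) ∩ ρ ⁻¹' {c}) * c⁻¹ ≤
      β * P[|X ⁻¹' Iic (β * c)].real (ρ ⁻¹' {c}) := by
    intro c hc
    rw [cond_real_apply P (hX measurableSet_Iic)]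
    rcases (hL0 c hc).eq_or_lt with rfl | hc0
    · simpa using mul_nonneg hβ (div_nonneg measureReal_nonneg measureReal_nonneg)
    rcases measureReal_nonneg.eq_or_lt' (a := P.real (X ⁻¹' Iic (β * c))) with h0 | h0
    · have : P.real (X ⁻¹' Iic (β * c) ∩ ρ ⁻¹' {c}) = 0 :=
        measureReal_mono_null inter_subset_left h0
      simp [this]
    · rw [← div_eq_mul_inv, ← mul_div_assoc, div_le_div_iff₀ hc0 h0]
      nlinarith [hsuper c hc, measureReal_nonneg (μ := P) (s := X ⁻¹' Iic (β * c) ∩ ρ ⁻¹' {c})]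
  obtain ⟨M, hM, -⟩ := L.exists_between' ∅ (by simp)
  calc ∫ ω, {ω | X ω ≤ β * ρ ω}.indicator (fun ω => (ρ ω)⁻¹) ω ∂P
      = ∑ c ∈ L, P.real (X ⁻¹' Iic (β * c) ∩ ρ ⁻¹' {c}) * c⁻¹ := by
        rw [indicator_inv_eq_sum hL,
          integral_finsetSum _ fun c _ => (integrable_const _).indicator (hmeas c)]
        simp_rw [integral_indicator_const _ (hmeas _), smul_eq_mul]
    _ ≤ ∑ c ∈ L, β * P[|X ⁻¹' Iic (β * c)].real (ρ ⁻¹' {c}) := Finset.sum_le_sum hterm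
    _ = β * ∑ c ∈ L, P[|X ⁻¹' Iic (β * c)].real (ρ ⁻¹' {c}) := by rw [Finset.mul_sum]
    _ ≤ β * P[|X ⁻¹' Iic (β * M)].real (ρ ⁻¹' Iio M) := by
        gcongr
        exact sum_measureReal_eq_le hρ (κ := fun c => P[|X ⁻¹' Iic (β * c)])
          (fun m _ _ hcd => hmono m (mul_le_mul_of_nonneg_left hcd hβ)) L M hM
    _ ≤ β := mul_le_of_le_one_right hβ measureReal_le_one

end BlanchardRoquain

/-! ### Positive regression dependence -/

section Regression

variable {Ω : Type*} [MeasurableSpace Ω] {P : Measure Ω} [IsFiniteMeasure P] {X : Ω → ℝ}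
  {A : Set Ω} {g : ℝ → ℝ}

theorem setIntegral_comp_eq_measureReal_inter (hX : Measurable X) (hA : MeasurableSet A)
    (hg : (fun ω => g (X ω)) =ᵐ[P]
      P[A.indicator fun _ => (1 : ℝ) | MeasurableSpace.comap X inferInstance])
    {B : Set ℝ} (hB : MeasurableSet B) :
    ∫ ω in X ⁻¹' B, g (X ω) ∂P = P.real (X ⁻¹' B ∩ A) := by
  rw [setIntegral_congr_ae (hX hB) (hg.mono fun ω h _ => h),
    setIntegral_condExp hX.comap_le ((integrable_const _).indicator hA) ⟨B, hB, rfl⟩,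
    setIntegral_indicator hA, setIntegral_const, smul_eq_mul, mul_one]

theorem monotone_cond_real_of_monotone (hX : Measurable X) (hA : MeasurableSet A)
    (hmono : Monotone g) (hg : (fun ω => g (X ω)) =ᵐ[P]
      P[A.indicator fun _ => (1 : ℝ) | MeasurableSpace.comap X inferInstance]) :
    Monotone fun u => P[|X ⁻¹' Iic u].real A := by
  intro u v huv
  have hgint : Integrable (fun ω => g (X ω)) P := integrable_condExp.congr hg.symm
  have hIic : MeasurableSet (X ⁻¹' Iic u) := hX measurableSet_Iic
  have hIoc : MeasurableSet (X ⁻¹' Ioc u v) := hX measurableSet_Ioc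
  have hsplit : X ⁻¹' Iic v = X ⁻¹' Iic u ∪ X ⁻¹' Ioc u v := by
    rw [← preimage_union, Iic_union_Ioc_eq_Iic huv]
  have hdisj : Disjoint (X ⁻¹' Iic u) (X ⁻¹' Ioc u v) := (Iic_disjoint_Ioc le_rfl).preimage X
  have hlow : P.real (X ⁻¹' Iic u ∩ A) ≤ g u * P.real (X ⁻¹' Iic u) := by
    rw [← setIntegral_comp_eq_measureReal_inter hX hA hg measurableSet_Iic, mul_comm,
      ← smul_eq_mul, ← setIntegral_const]
    exact setIntegral_mono_on hgint.integrableOn (integrable_const _).integrableOn hIic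
      fun ω hω => hmono hω
  have hhigh : g u * P.real (X ⁻¹' Ioc u v) ≤ P.real (X ⁻¹' Ioc u v ∩ A) := by
    rw [← setIntegral_comp_eq_measureReal_inter hX hA hg measurableSet_Ioc]
    exact setIntegral_ge_of_const_le_real hIoc (measure_ne_top _ _)
      (fun ω hω => hmono hω.1.le) hgint.integrableOn
  simp only [cond_real_apply P (hX measurableSet_Iic)]
  rw [hsplit, union_inter_distrib_right, measureReal_union hdisj hIoc,
    measureReal_union (hdisj.mono inter_subset_left inter_subset_left) (hIoc.inter hA)]
  rcases measureReal_nonneg.eq_or_lt' (a := P.real (X ⁻¹' Iic u)) with h0 | h0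
  · simp only [h0, div_zero]
    positivity
  · rw [div_le_div_iff₀ h0 (by positivity)]
    nlinarith [mul_le_mul_of_nonneg_right hlow (measureReal_nonneg (μ := P) (s := X ⁻¹' Ioc u v)),
      mul_le_mul_of_nonneg_left hhigh h0.le]

theorem exists_monotone_eqOn_Icc {a b : ℝ} (hab : a ≤ b) (hg : MonotoneOn g (Icc a b)) :
    ∃ h, Monotone h ∧ EqOn g h (Icc a b) :=
  hg.exists_monotone_extension
    (hg.map_bddBelow Subset.rfl ⟨a, fun _ hx => hx.1, left_mem_Icc.2 hab⟩)
    (hg.map_bddAbove Subset.rfl ⟨b, fun _ hx => hx.2, right_mem_Icc.2 hab⟩)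

/-- The random vector `X` is regression dependent on its coordinate `j`: the conditional
probability that `X` lies in an upper set, given `X j`, is a nondecreasing function of `X j`.
Coordinates are p-values, hence monotonicity is only asked on `[0, 1]`. -/
def RegressionDependent {ι : Type*} (P : Measure Ω) (X : Ω → ι → ℝ) (j : ι) : Prop :=
  ∀ D : Set (ι → ℝ), MeasurableSet D → IsUpperSet D →
    ∃ g : ℝ → ℝ, MonotoneOn g (Icc 0 1) ∧
      (fun ω => g (X ω j)) =ᵐ[P] P[fun ω => D.indicator (fun _ => (1 : ℝ)) (X ω) |
        MeasurableSpace.comap (fun ω => X ω j) inferInstance]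

theorem RegressionDependent.monotone_cond {ι : Type*} {X : Ω → ι → ℝ} {j : ι}
    (h : RegressionDependent P X j) (hX : Measurable X) (hXj : ∀ ω, X ω j ∈ Icc (0 : ℝ) 1)
    {D : Set (ι → ℝ)} (hD : MeasurableSet D) (hup : IsUpperSet D) :
    Monotone fun u => P[|(fun ω => X ω j) ⁻¹' Iic u].real (X ⁻¹' D) := by
  obtain ⟨g, hg, hgD⟩ := h D hD hup
  obtain ⟨g', hg', heq⟩ := exists_monotone_eqOn_Icc zero_le_one hg
  refine monotone_cond_real_of_monotone ((measurable_pi_apply j).comp hX) (hX hD) hg' ?_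
  simp only [← fun ω => heq (hXj ω)]
  exact hgD

end Regression

section DiscreteFDR

variable {Ω ι : Type*} [MeasurableSpace Ω] [Fintype ι] {P : Measure Ω} [IsFiniteMeasure P]
  {w : ι → ℝ} {N : Finset ι} {β : ℝ} {X : Ω → ι → ℝ}

theorem integral_weightedFDP_le (hw : 0 ≤ w) (hβ : 0 ≤ β) (hβw : β * ∑ i, w i ≤ 1)
    (hX : Measurable X) (hX01 : ∀ ω, ∀ j ∈ N, X ω j ∈ Icc (0 : ℝ) 1)
    (hsuper : ∀ j ∈ N, ∀ r ∈ Icc (0 : ℝ) 1, P.real ((fun ω => X ω j) ⁻¹' Iic r) ≤ r)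
    (hdep : ∀ j ∈ N, RegressionDependent P X j) :
    ∫ ω, weightedFDP w N β (X ω) ∂P ≤ β * ∑ i ∈ N, w i := by
  have hρ : Measurable fun ω => rejectedWeight w β (X ω) :=
    (measurable_rejectedWeight w β).comp hX
  have hXj : ∀ j, Measurable fun ω => X ω j := measurable_pi_iff.1 hX
  set L : Finset ℝ := Finset.univ.image fun A : Finset ι => ∑ i ∈ A, w i with hLdef
  have hρL : ∀ ω, rejectedWeight w β (X ω) ∈ L := fun ω => by
    obtain ⟨A, -, hA⟩ := exists_selfConsistent_sum_eq w β (X ω)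
    exact Finset.mem_image.2 ⟨A, Finset.mem_univ A, hA⟩
  have hL : ∀ c ∈ L, 0 ≤ c ∧ β * c ≤ 1 := by
    simp only [hLdef, Finset.mem_image, Finset.mem_univ, true_and, forall_exists_index,
      forall_apply_eq_imp_iff]
    exact fun A => ⟨Finset.sum_nonneg fun i _ => hw i, (mul_le_mul_of_nonneg_left
      (Finset.sum_le_sum_of_subset_of_nonneg A.subset_univ fun i _ _ => hw i) hβ).trans hβw⟩
  have hterm : ∀ j ∈ N, ∫ ω, {ω | X ω j ≤ β * rejectedWeight w β (X ω)}.indicator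
      (fun ω => (rejectedWeight w β (X ω))⁻¹) ω ∂P ≤ β := fun j hj =>
    integral_indicator_inv_le (hXj j) hρ hρL (fun c hc => (hL c hc).1) hβ
      (fun c hc => hsuper j hj _ ⟨mul_nonneg hβ (hL c hc).1, (hL c hc).2⟩)
      fun m => (hdep j hj).monotone_cond hX (fun ω => hX01 ω j hj)
        (measurable_rejectedWeight w β measurableSet_Iic)
        fun _ _ hxy hx => (rejectedWeight_antitone w β hxy).trans hx
  calc ∫ ω, weightedFDP w N β (X ω) ∂P
      = ∑ i ∈ N, w i * ∫ ω, {ω | X ω i ≤ β * rejectedWeight w β (X ω)}.indicator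
          (fun ω => (rejectedWeight w β (X ω))⁻¹) ω ∂P := by
        simp only [weightedFDP_eq_sum_indicator, ← integral_const_mul]
        exact integral_finsetSum _ fun i _ =>
          (integrable_indicator_inv (hXj i) hρ hρL).const_mul (w i)
    _ ≤ ∑ i ∈ N, w i * β :=
        Finset.sum_le_sum fun i hi => mul_le_mul_of_nonneg_left (hterm i hi) (hw i)
    _ = β * ∑ i ∈ N, w i := by rw [← Finset.sum_mul, mul_comm]

end DiscreteFDR

/-! ### Limits of weighted step-up procedures -/

section Limit

theorem tendstoUniformlyOn_mul_of_isCompact {κ Y : Type*} [TopologicalSpace Y] {K : Set Y}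
    {l : Filter κ} {β : κ → ℝ} {B : ℝ} {G : κ → Y → ℝ} {F : Y → ℝ} (hK : IsCompact K)
    (hβ : Tendsto β l (𝓝 B)) (hF : ContinuousOn F K) (hG : TendstoUniformlyOn G F l K) :
    TendstoUniformlyOn (fun k y => β k * G k y) (fun y => B * F y) l K := by
  have hconst : TendstoLocallyUniformlyOn (fun k _ => β k) (fun _ => B) l K :=
    (hβ.tendstoUniformlyOn_const K).tendstoLocallyUniformlyOn
  exact (tendstoLocallyUniformlyOn_iff_tendstoUniformlyOn_of_compact hK).1
    (hconst.mul₀ hG.tendstoLocallyUniformlyOn continuousOn_const hF)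

variable {κ : Type*} {l : Filter κ} {ι : κ → Type*} [∀ k, Fintype (ι k)] {w x : ∀ k, ι k → ℝ}
  {N : ∀ k, Finset (ι k)} {β : κ → ℝ} {B : ℝ} {a b : ℝ → ℝ}

theorem tendsto_weightedFDP_div (hw : ∀ k, 0 ≤ w k) (hβ : ∀ k, 0 ≤ β k)
    (hβw : ∀ k, β k * ∑ i, w k i ≤ 1) (hB : Tendsto β l (𝓝 B)) (hB0 : 0 ≤ B)
    (ha : ContinuousOn a (Icc 0 1)) (hb : ContinuousOn b (Icc 0 1)) (ha0 : 0 ≤ a 0)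
    (hG1 : TendstoUniformlyOn (fun k => cumulatedWeight (w k) Finset.univ (x k)) a l (Icc 0 1))
    (hG2 : TendstoUniformlyOn (fun k => cumulatedWeight (w k) (N k) (x k)) b l (Icc 0 1))
    (hpos : 0 < stepUpThreshold fun r => B * a r)
    (hcross : ∃ᶠ r in 𝓝 (stepUpThreshold fun r => B * a r), r ∈ Icc (0 : ℝ) 1 ∧ r < B * a r) :
    Tendsto (fun k => weightedFDP (w k) (N k) (β k) (x k)) l
      (𝓝 (b (stepUpThreshold fun r => B * a r) / a (stepUpThreshold fun r => B * a r))) := by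
  set τ := stepUpThreshold fun r => B * a r
  have hF : ContinuousOn (fun r => B * a r) (Icc 0 1) := continuousOn_const.mul ha
  have hgreat := fun k => isGreatest_mul_rejectedWeight (x := x k) (hw k) (hβ k) (hβw k)
  obtain ⟨hτ, hτa⟩ := stepUpThreshold_mem hF (mul_nonneg hB0 ha0)
  have haτ : 0 < a τ := pos_of_mul_pos_right (hpos.trans_le hτa) hB0
  have hlim : Tendsto (fun k => β k * rejectedWeight (w k) (β k) (x k)) l (𝓝[Icc 0 1] τ) :=
    tendsto_nhdsWithin_iff.2
      ⟨tendsto_stepUpThreshold hF (tendstoUniformlyOn_mul_of_isCompact isCompact_Icc hB ha hG1)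
        hgreat hcross, Eventually.of_forall fun k => (hgreat k).1.1⟩
  have hden := hG1.tendsto_comp (ha τ hτ) hlim
  simp only [cumulatedWeight_mul_rejectedWeight (hw _) (hβ _)] at hden
  exact (hG2.tendsto_comp (hb τ hτ) hlim).div hden haτ.ne'

theorem tendsto_weightedFDP_zero {δ : ℝ} (hw : ∀ k, 0 ≤ w k) (hβ : ∀ k, 0 ≤ β k)
    (hβw : ∀ k, β k * ∑ i, w k i ≤ 1) (hB : Tendsto β l (𝓝 B)) (ha : ContinuousOn a (Icc 0 1))
    (hG1 : TendstoUniformlyOn (fun k => cumulatedWeight (w k) Finset.univ (x k)) a l (Icc 0 1))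
    (hδ : stepUpThreshold (fun r => B * a r) < δ) (hx : ∀ k, ∀ i ∈ N k, δ ≤ x k i) :
    Tendsto (fun k => weightedFDP (w k) (N k) (β k) (x k)) l (𝓝 0) := by
  have hev := eventually_lt_of_stepUpThreshold_lt (continuousOn_const.mul ha)
    (tendstoUniformlyOn_mul_of_isCompact isCompact_Icc hB ha hG1)
    (fun k => (isGreatest_mul_rejectedWeight (x := x k) (hw k) (hβ k) (hβw k)).1) hδ
  refine tendsto_const_nhds.congr' ?_
  filter_upwards [hev] with k hk
  exact (weightedFDP_eq_zero fun i hi => hk.trans_le (hx k i hi)).symm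

theorem integral_le_of_tendsto_weightedFDP [l.IsCountablyGenerated] [l.NeBot] {Ω : Type*}
    [MeasurableSpace Ω] {P : Measure Ω} [IsFiniteMeasure P] {X : ∀ k, Ω → ι k → ℝ} {Q : Ω → ℝ}
    {c : κ → ℝ} {C : ℝ} (hw : ∀ k, 0 ≤ w k) (hβ : ∀ k, 0 ≤ β k) (hX : ∀ k, Measurable (X k))
    (hc : ∀ k, ∫ ω, weightedFDP (w k) (N k) (β k) (X k ω) ∂P ≤ c k) (hC : Tendsto c l (𝓝 C))
    (hQ : ∀ᵐ ω ∂P, Tendsto (fun k => weightedFDP (w k) (N k) (β k) (X k ω)) l (𝓝 (Q ω))) :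
    ∫ ω, Q ω ∂P ≤ C := by
  refine le_of_tendsto_of_tendsto' (tendsto_integral_filter_of_dominated_convergence
    (fun _ => 1) (Eventually.of_forall fun k => ?_) (Eventually.of_forall fun k => ?_)
    (integrable_const 1) hQ) hC hc
  · exact ((measurable_weightedFDP _ _ _).comp (hX k)).aestronglyMeasurable
  · refine ae_of_all P fun ω => ?_
    have hmem := weightedFDP_mem_Icc (N := N k) (x := X k ω) (hw k) (hβ k)
    rw [Real.norm_of_nonneg hmem.1]
    exact hmem.2

end Limit

/-! ### The functional Benjamini–Hochberg procedure -/

section Functional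

variable {E : Type*} [MeasurableSpace E] {ν : Measure E} {T U : Set E} {α : ℝ} {q : E → ℝ}

/-- The cumulated p-value function `r ↦ ν {s ∈ B | q s ≤ r}` of `q` over the region `B`. -/
noncomputable def cumulatedPValue (ν : Measure E) (B : Set E) (q : E → ℝ) (r : ℝ) : ℝ :=
  ν.real {s ∈ B | q s ≤ r}

/-- The adjusted threshold `α*` of the functional Benjamini–Hochberg procedure at level `α`. -/
noncomputable def bhThreshold (ν : Measure E) (T : Set E) (α : ℝ) (q : E → ℝ) : ℝ :=
  sSup {r ∈ Icc (0 : ℝ) 1 | r / α ≤ cumulatedPValue ν T q r / ν.real T}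

/-- The false discovery proportion of the functional Benjamini–Hochberg procedure with true null
region `U`. It is `0` when the rejection region is null, by the convention `x / 0 = 0`. -/
noncomputable def functionalFDP (ν : Measure E) (T U : Set E) (α : ℝ) (q : E → ℝ) : ℝ :=
  cumulatedPValue ν U q (bhThreshold ν T α q) / cumulatedPValue ν T q (bhThreshold ν T α q)

/-- The regularity assumptions (a1)–(a3) on a p-value function `q` over `T`; of (a2), only the
crossing from above at the adjusted threshold is recorded. -/
structure IsRegularPValue (ν : Measure E) (T : Set E) (α : ℝ) (q : E → ℝ) : Prop where
  measure_fiber : ∀ r ∈ Icc (0 : ℝ) 1, ν {s ∈ T | q s = r} = 0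
  frequently_lt : bhThreshold ν T α q ∈ Ioc 0 α → ∃ᶠ r in 𝓝 (bhThreshold ν T α q),
    r ∈ Icc (0 : ℝ) 1 ∧ r / α < cumulatedPValue ν T q r / ν.real T
  sInf_pos : bhThreshold ν T α q = 0 → 0 < sInf (q '' T)

theorem cumulatedPValue_of_forall_le {r : ℝ} (hq : ∀ s ∈ T, q s ≤ r) :
    cumulatedPValue ν T q r = ν.real T := by
  rw [cumulatedPValue, sep_eq_self_iff_mem_true.2 hq]

theorem bhThreshold_nonneg : 0 ≤ bhThreshold ν T α q :=
  Real.sSup_nonneg fun _ hr => hr.1.1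

theorem bhThreshold_eq_stepUpThreshold (hα : 0 < α) :
    bhThreshold ν T α q = stepUpThreshold fun r => α / ν.real T * cumulatedPValue ν T q r := by
  simp only [bhThreshold, stepUpThreshold, div_le_iff₀' hα, mul_div_assoc', div_mul_eq_mul_div]

theorem functionalFDP_eq_ite (hUT : U ⊆ T) :
    functionalFDP ν T U α q =
      if 0 < ν ((U ∩ {t | q t ≤ bhThreshold ν T α q}) ∪ ({t ∈ T | q t ≤ bhThreshold ν T α q} \ U))
      then ν.real (U ∩ {t | q t ≤ bhThreshold ν T α q}) /
        ν.real ((U ∩ {t | q t ≤ bhThreshold ν T α q}) ∪ ({t ∈ T | q t ≤ bhThreshold ν T α q} \ U))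
      else 0 := by
  have hunion : (U ∩ {t | q t ≤ bhThreshold ν T α q}) ∪
      ({t ∈ T | q t ≤ bhThreshold ν T α q} \ U) = {t ∈ T | q t ≤ bhThreshold ν T α q} := by
    ext t
    have := @hUT t
    simp only [mem_union, mem_inter_iff, Set.mem_sdiff, mem_ofPred_eq]
    tauto
  rw [hunion, functionalFDP]
  split_ifs with h
  · rfl
  · rw [cumulatedPValue, cumulatedPValue, measureReal_def ν {s ∈ T | _},
      nonpos_iff_eq_zero.1 (not_lt.1 h), ENNReal.toReal_zero, div_zero]

variable [IsFiniteMeasure ν]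

theorem cumulatedPValue_le_measureReal (r : ℝ) : cumulatedPValue ν T q r ≤ ν.real T :=
  measureReal_mono (sep_subset T _)

theorem bhThreshold_le (hα : 0 < α) : bhThreshold ν T α q ≤ α := by
  refine Real.sSup_le (fun r hr => ?_) hα.le
  have hratio : r / α ≤ 1 := hr.2.trans
    (div_le_one_of_le₀ (cumulatedPValue_le_measureReal r) measureReal_nonneg)
  exact (div_le_one hα).1 hratio

theorem continuousAt_cumulatedPValue (hT : MeasurableSet T) (hq : Measurable q) {r : ℝ}
    (hr : ν {s ∈ T | q s = r} = 0) : ContinuousAt (cumulatedPValue ν T q) r := by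
  have hmeas : ∀ r, MeasurableSet {s ∈ T | q s ≤ r} := fun r =>
    hT.inter (measurableSet_le hq measurable_const)
  have hae : ∀ᵐ s ∂ν, ∀ᶠ r' in 𝓝 r, s ∈ {s ∈ T | q s ≤ r'} ↔ s ∈ {s ∈ T | q s ≤ r} := by
    filter_upwards [compl_mem_ae_iff.2 hr] with s hs
    by_cases hsT : s ∈ T
    · have hne : q s ≠ r := fun h => hs ⟨hsT, h⟩
      rcases hne.lt_or_gt with hlt | hgt
      · filter_upwards [lt_mem_nhds hlt] with r' hr'
        simp [hlt.le, hr'.le]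
      · filter_upwards [gt_mem_nhds hgt] with r' hr'
        simp [hgt.not_ge, hr'.not_ge]
    · simp [hsT]
  exact (ENNReal.tendsto_toReal (measure_ne_top ν _)).comp
    (tendsto_measure_of_ae_tendsto_indicator_of_isFiniteMeasure (𝓝 r) (hmeas r) hmeas hae)

theorem IsRegularPValue.continuousOn_cumulatedPValue (h : IsRegularPValue ν T α q)
    (hq : Measurable q) (hU : MeasurableSet U) (hUT : U ⊆ T) :
    ContinuousOn (cumulatedPValue ν U q) (Icc 0 1) := by
  intro r hr
  have hsub : {s ∈ U | q s = r} ⊆ {s ∈ T | q s = r} := fun _ hs => ⟨hUT hs.1, hs.2⟩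
  exact (continuousAt_cumulatedPValue hU hq
    (measure_mono_null hsub (h.measure_fiber r hr))).continuousWithinAt

theorem tendsto_weightedFDP_functionalFDP {κ : Type*} {l : Filter κ} {ι : κ → Type*}
    [∀ k, Fintype (ι k)] {w x : ∀ k, ι k → ℝ} {N : ∀ k, Finset (ι k)} {β : κ → ℝ}
    (hT : MeasurableSet T) (hU : MeasurableSet U) (hUT : U ⊆ T) (hq : Measurable q)
    (hq0 : ∀ s ∈ T, 0 ≤ q s) (hνT : ν T ≠ 0) (hα : 0 < α) (hreg : IsRegularPValue ν T α q)
    (hw : ∀ k, 0 ≤ w k) (hβ : ∀ k, 0 ≤ β k) (hβw : ∀ k, β k * ∑ i, w k i ≤ 1)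
    (hβlim : Tendsto β l (𝓝 (α / ν.real T))) (hx : ∀ k i, x k i ∈ q '' T)
    (hG1 : TendstoUniformlyOn (fun k => cumulatedWeight (w k) Finset.univ (x k))
      (cumulatedPValue ν T q) l (Icc 0 1))
    (hG2 : TendstoUniformlyOn (fun k => cumulatedWeight (w k) (N k) (x k))
      (cumulatedPValue ν U q) l (Icc 0 1)) :
    Tendsto (fun k => weightedFDP (w k) (N k) (β k) (x k)) l (𝓝 (functionalFDP ν T U α q)) := by
  have hνT0 : 0 < ν.real T := ENNReal.toReal_pos hνT (measure_ne_top ν T)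
  have ha := hreg.continuousOn_cumulatedPValue hq hT Subset.rfl
  have hτ := bhThreshold_eq_stepUpThreshold (ν := ν) (T := T) (q := q) hα
  rcases (bhThreshold_nonneg (ν := ν) (T := T) (α := α) (q := q)).eq_or_lt' with h0 | hpos
  · have hδ := hreg.sInf_pos h0
    have hle : ∀ y ∈ q '' T, sInf (q '' T) ≤ y := fun y hy =>
      csInf_le ⟨0, forall_mem_image.2 hq0⟩ hy
    have hFDP : functionalFDP ν T U α q = 0 := by
      have hempty : {s ∈ U | q s ≤ 0} = ∅ := eq_empty_of_forall_notMem fun s hs =>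
        (hδ.trans_le (hle _ (mem_image_of_mem q (hUT hs.1)))).not_ge hs.2
      rw [functionalFDP, h0, cumulatedPValue, hempty, measureReal_empty, zero_div]
    rw [hFDP]
    exact tendsto_weightedFDP_zero hw hβ hβw hβlim ha hG1 (by rwa [← hτ, h0])
      fun k i _ => hle _ (hx k i)
  · rw [functionalFDP, hτ]
    refine tendsto_weightedFDP_div hw hβ hβw hβlim (by positivity) ha
      (hreg.continuousOn_cumulatedPValue hq hU hUT) measureReal_nonneg hG1 hG2 (by rwa [← hτ]) ?_
    rw [← hτ]
    refine (hreg.frequently_lt ⟨hpos, bhThreshold_le hα⟩).mono fun r hr => ⟨hr.1, ?_⟩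
    rw [div_mul_eq_mul_div, mul_div_assoc, ← div_lt_iff₀' hα]
    exact hr.2

end Functional

/-! ### Control of the functional false discovery rate -/

section Grid

variable {E : Type*}

/-- An enumeration of the points of the finite grid `S`. -/
noncomputable def gridPoint (S : Finset E) (i : Fin S.card) : E :=
  S.equivFin.symm i

theorem gridPoint_mem (S : Finset E) (i : Fin S.card) : gridPoint S i ∈ S :=
  (S.equivFin.symm i).2

theorem sum_gridPoint (S : Finset E) (φ : E → Prop) [DecidablePred φ] (f : E → ℝ) :
    ∑ i with φ (gridPoint S i), f (gridPoint S i) = ∑ s ∈ S with φ s, f s := by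
  rw [Finset.sum_filter, Finset.sum_filter, ← Finset.sum_coe_sort S fun s => if φ s then f s else 0]
  exact Equiv.sum_comp S.equivFin.symm fun s : S => if φ s then f s else 0

theorem cumulatedWeight_gridPoint (S : Finset E) (U : Set E) (f q : E → ℝ) (r : ℝ) :
    cumulatedWeight (fun i => f (gridPoint S i)) {i | gridPoint S i ∈ U}
      (fun i => q (gridPoint S i)) r = ∑ s ∈ S with s ∈ U ∧ q s ≤ r, f s := by
  rw [cumulatedWeight, Finset.filter_filter]
  exact sum_gridPoint S (fun s => s ∈ U ∧ q s ≤ r) f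

theorem cumulatedWeight_univ_gridPoint (S : Finset E) (f q : E → ℝ) (r : ℝ) :
    cumulatedWeight (fun i => f (gridPoint S i)) Finset.univ
      (fun i => q (gridPoint S i)) r = ∑ s ∈ S with q s ≤ r, f s :=
  sum_gridPoint S (fun s => q s ≤ r) f

end Grid

section Control

variable {E Ω : Type*} [MeasurableSpace Ω]

/-- The process `(p · t)`, for `t ∈ T`, is PRDS (positively regression dependent on a subset) on
`U`: every finite subfamily is regression dependent on each of its coordinates with index in
`U`. -/
def PRDSOn (P : Measure Ω) (p : Ω → E → ℝ) (T U : Set E) : Prop :=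
  ∀ (n : ℕ) (t : Fin n → E), (∀ j, t j ∈ T) → ∀ j, t j ∈ U →
    RegressionDependent P (fun ω i => p ω (t i)) j

theorem integral_weightedFDP_gridPoint_le {P : Measure Ω} [IsFiniteMeasure P] {p : Ω → E → ℝ}
    {T U : Set E} {S : Finset E} {f : E → ℝ} {β : ℝ} (hS : ↑S ⊆ T) (hf : ∀ s ∈ S, 0 ≤ f s)
    (hβ : 0 ≤ β) (hβf : β * ∑ i, f (gridPoint S i) ≤ 1) (hp : ∀ t ∈ T, Measurable fun ω => p ω t)
    (hp01 : ∀ ω, ∀ t ∈ U, p ω t ∈ Icc (0 : ℝ) 1)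
    (hsuper : ∀ t ∈ U, ∀ x ∈ Icc (0 : ℝ) 1, P.real {ω | p ω t ≤ x} ≤ x)
    (hPRDS : PRDSOn P p T U) :
    ∫ ω, weightedFDP (fun i => f (gridPoint S i)) {i | gridPoint S i ∈ U} β
      (fun i => p ω (gridPoint S i)) ∂P ≤ β * ∑ i with gridPoint S i ∈ U, f (gridPoint S i) :=
  integral_weightedFDP_le (fun i => hf _ (gridPoint_mem S i)) hβ hβf
    (measurable_pi_lambda _ fun i => hp _ (hS (gridPoint_mem S i)))
    (fun ω _ hj => hp01 ω _ (Finset.mem_filter.1 hj).2)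
    (fun _ hj => hsuper _ (Finset.mem_filter.1 hj).2)
    fun j hj => hPRDS _ _ (fun i => hS (gridPoint_mem S i)) j (Finset.mem_filter.1 hj).2

variable [MeasurableSpace E]

theorem tendsto_sum_of_tendstoUniformlyOn_cumulatedWeight {κ : Type*} {l : Filter κ}
    {ι : κ → Type*} {w x : ∀ k, ι k → ℝ} {N : ∀ k, Finset (ι k)} {ν : Measure E} {T : Set E}
    {q : E → ℝ} (hx : ∀ k, ∀ i ∈ N k, x k i ≤ 1) (hq : ∀ s ∈ T, q s ≤ 1)
    (hG : TendstoUniformlyOn (fun k => cumulatedWeight (w k) (N k) (x k)) (cumulatedPValue ν T q) l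
      (Icc 0 1)) :
    Tendsto (fun k => ∑ i ∈ N k, w k i) l (𝓝 (ν.real T)) := by
  have h := hG.tendsto_at (right_mem_Icc.2 zero_le_one)
  rw [cumulatedPValue_of_forall_le hq] at h
  exact h.congr fun k => cumulatedWeight_of_forall_le (hx k)

theorem fBH_controls_fFDR_general {ν : Measure E} [IsFiniteMeasure ν] {T U : Set E}
    (hT : MeasurableSet T) (hU : MeasurableSet U) (hUT : U ⊆ T) (hνT : ν T ≠ 0)
    {α : ℝ} (hα : α ∈ Ioc (0 : ℝ) 1) {P : Measure Ω} [IsProbabilityMeasure P] {p : Ω → E → ℝ}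
    (hp : ∀ t ∈ T, Measurable fun ω => p ω t) (hp' : ∀ ω, Measurable (p ω))
    (hp01 : ∀ ω, ∀ t ∈ T, p ω t ∈ Icc (0 : ℝ) 1)
    {S : ℕ → Finset E} (hS : ∀ k, ↑(S k) ⊆ T)
    {w : ℕ → E → ℝ} (hw : ∀ k, ∀ s ∈ S k, 0 ≤ w k s)
    (hG1 : ∀ᵐ ω ∂P, TendstoUniformlyOn (fun k r => ∑ s ∈ S k with p ω s ≤ r, w k s)
      (cumulatedPValue ν T (p ω)) atTop (Icc 0 1))
    (hG2 : ∀ᵐ ω ∂P, TendstoUniformlyOn (fun k r => ∑ s ∈ S k with s ∈ U ∧ p ω s ≤ r, w k s)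
      (cumulatedPValue ν U (p ω)) atTop (Icc 0 1))
    (hreg : ∀ᵐ ω ∂P, IsRegularPValue ν T α (p ω)) (hPRDS : PRDSOn P p T U)
    (hsuper : ∀ t ∈ U, ∀ x ∈ Icc (0 : ℝ) 1, P.real {ω | p ω t ≤ x} ≤ x) :
    ∫ ω, functionalFDP ν T U α (p ω) ∂P ≤ α * ν.real U / ν.real T ∧
      α * ν.real U / ν.real T ≤ α := by
  simp only [← cumulatedWeight_univ_gridPoint, ← cumulatedWeight_gridPoint] at hG1 hG2
  set β : ℕ → ℝ := fun k => α / ∑ i, w k (gridPoint (S k) i)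
  have hνT0 : 0 < ν.real T := ENNReal.toReal_pos hνT (measure_ne_top ν T)
  have hw0 : ∀ k, 0 ≤ fun i => w k (gridPoint (S k) i) := fun k i => hw k _ (gridPoint_mem _ i)
  have hmem : ∀ k i, gridPoint (S k) i ∈ T := fun k i => hS k (gridPoint_mem _ i)
  have hβ : ∀ k, 0 ≤ β k := fun k => div_nonneg hα.1.le (Finset.sum_nonneg fun i _ => hw0 k i)
  have hβw : ∀ k, β k * ∑ i, w k (gridPoint (S k) i) ≤ 1 := fun k => by
    rw [div_mul_eq_mul_div, mul_div_assoc]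
    exact (mul_le_of_le_one_right hα.1.le (div_self_le_one _)).trans hα.2
  obtain ⟨ω₀, hT₀, hU₀⟩ := (hG1.and hG2).exists
  have hsumT := tendsto_sum_of_tendstoUniformlyOn_cumulatedWeight
    (fun k i _ => (hp01 ω₀ _ (hmem k i)).2) (fun s hs => (hp01 ω₀ s hs).2) hT₀
  have hsumU := tendsto_sum_of_tendstoUniformlyOn_cumulatedWeight
    (fun k i _ => (hp01 ω₀ _ (hmem k i)).2) (fun s hs => (hp01 ω₀ s (hUT hs)).2) hU₀
  have hβlim : Tendsto β atTop (𝓝 (α / ν.real T)) := tendsto_const_nhds.div hsumT hνT0.ne'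
  constructor
  · rw [mul_div_right_comm]
    refine integral_le_of_tendsto_weightedFDP hw0 hβ
      (fun k => measurable_pi_lambda _ fun i => hp _ (hmem k i))
      (fun k => integral_weightedFDP_gridPoint_le (hS k) (hw k) (hβ k) (hβw k) hp
        (fun ω t ht => hp01 ω t (hUT ht)) hsuper hPRDS) (hβlim.mul hsumU) ?_
    filter_upwards [hG1, hG2, hreg] with ω hω1 hω2 hωreg
    exact tendsto_weightedFDP_functionalFDP hT hU hUT (hp' ω) (fun s hs => (hp01 ω s hs).1) hνT
      hα.1 hωreg hw0 hβ hβw hβlim (fun k i => mem_image_of_mem _ (hmem k i)) hω1 hω2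
  · rw [mul_div_assoc]
    exact mul_le_of_le_one_right hα.1.le ((div_le_one hνT0).2 (measureReal_mono hUT))

end Control

section Density

variable {E : Type*} [MeasurableSpace E] {μ : Measure E} {T : Set E} {f : E → ℝ}

theorem isFiniteMeasure_withDensity_of_le {C : ℝ} (hT : MeasurableSet T) (hμT : μ T ≠ ⊤)
    (hC : ∀ t ∈ T, f t ≤ C) :
    IsFiniteMeasure ((μ.restrict T).withDensity fun t => ENNReal.ofReal (f t)) := by
  have hle : ∫⁻ t in T, ENNReal.ofReal (f t) ∂μ ≤ ENNReal.ofReal C * μ T := by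
    rw [← setLIntegral_const]
    exact setLIntegral_mono' hT fun t ht => ENNReal.ofReal_le_ofReal (hC t ht)
  exact isFiniteMeasure_withDensity
    (hle.trans_lt (ENNReal.mul_lt_top ENNReal.ofReal_lt_top hμT.lt_top)).ne

theorem withDensity_ofReal_restrict_ne_zero (hT : MeasurableSet T) (hf : Measurable f)
    (hf_pos : ∀ t ∈ T, 0 < f t) (hμT : μ T ≠ 0) :
    (μ.restrict T).withDensity (fun t => ENNReal.ofReal (f t)) T ≠ 0 := by
  rw [withDensity_apply _ hT, Measure.restrict_restrict hT, inter_self]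
  have hsub : T ⊆ Function.support fun t => ENNReal.ofReal (f t) := fun t ht =>
    (ENNReal.ofReal_pos.2 (hf_pos t ht)).ne'
  refine ((setLIntegral_pos_iff hf.ennreal_ofReal).2 ?_).ne'
  rwa [inter_eq_self_of_subset_right hsub, pos_iff_ne_zero]

end Density

/-- control of the functional FDR: suppose there exist nonempty finite nested
grids `S_1 ⊆ S_2 ⊆ ⋯ ⊆ T` such that almost surely the realized p-value function `p_ω` satisfies
(G1w) and (G2w); that almost surely `p_ω` satisfies (a1)–(a3); that the process `(p(·,t))_{t∈T}`
is PRDS on `U`; that the null p-values are superuniform; and that `ω ↦ Q(ω)` is measurable.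
Then the functional Benjamini–Hochberg procedure at level `α` controls the functional false
discovery rate: `E[Q] ≤ α·ν(U)/ν(T) ≤ α`, where `Q(ω) = ν(V)/ν(V ∪ S)` (or `0` if
`ν(V ∪ S) = 0`) with `V = U ∩ {t : p_ω t ≤ α*}` and `S = {t ∈ T : p_ω t ≤ α*} \ U`. -/
theorem fBH_controls_fFDR {d : ℕ}
    (T : Set (EuclideanSpace ℝ (Fin d)))
    (hT_open : IsOpen T) (hT_bdd : Bornology.IsBounded T) (hT_ne : T.Nonempty)
    (hT_norm : volume T = 1)
    -- weight function and weighted measure ν = f·μ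
    (f : EuclideanSpace ℝ (Fin d) → ℝ) (hf_meas : Measurable f)
    (hf_pos : ∀ t ∈ T, 0 < f t) (hf_bdd : ∃ C : ℝ, ∀ t ∈ T, f t ≤ C)
    (ν : Measure (EuclideanSpace ℝ (Fin d)))
    (hν : ν = (volume.restrict T).withDensity (fun x => ENNReal.ofReal (f x)))
    (U : Set (EuclideanSpace ℝ (Fin d))) (hU_sub : U ⊆ T) (hU_meas : MeasurableSet U)
    (α : ℝ) (hα : α ∈ Set.Ioo (0:ℝ) 1)
    {Ω : Type*} [MeasurableSpace Ω] (P : Measure Ω) [IsProbabilityMeasure P]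
    -- the random p-value function
    (p : Ω → EuclideanSpace ℝ (Fin d) → ℝ)
    (hp_meas : ∀ t, Measurable (fun ω => p ω t))
    (hp_meas' : ∀ ω, Measurable (p ω))
    (hp_val : ∀ ω, ∀ t ∈ T, p ω t ∈ Set.Icc (0:ℝ) 1)
    -- realized cumulated p-value functions and adjusted thresholds
    (a : Ω → ℝ → ℝ) (ha : ∀ ω r, a ω r = (ν {s ∈ T | p ω s ≤ r}).toReal)
    (αStar : Ω → ℝ)
    (hαStar : ∀ ω, αStar ω = sSup {r ∈ Set.Icc (0:ℝ) 1 | r / α ≤ a ω r / (ν T).toReal})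
    -- false rejections V, true rejections S', and the false discovery proportion Q
    (V Sr : Ω → Set (EuclideanSpace ℝ (Fin d)))
    (hV : ∀ ω, V ω = U ∩ {t | p ω t ≤ αStar ω})
    (hSr : ∀ ω, Sr ω = {t ∈ T | p ω t ≤ αStar ω} \ U)
    (Q : Ω → ℝ)
    (hQ : ∀ ω, Q ω = if 0 < ν (V ω ∪ Sr ω)
      then (ν (V ω)).toReal / (ν (V ω ∪ Sr ω)).toReal else 0)
    (hQ_meas : Measurable Q)
    -- there exist nested grids along which, almost surely, (G1w) and (G2w) hold
    (hgrids : ∃ S : ℕ → Finset (EuclideanSpace ℝ (Fin d)),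
      (∀ k, (S k).Nonempty) ∧ (∀ k, ↑(S k) ⊆ T) ∧ (∀ k, S k ⊆ S (k + 1)) ∧
      ∀ᵐ ω ∂P,
        TendstoUniformlyOn
          (fun k r => (∑ s ∈ (S k).filter (fun s => p ω s ≤ r), f s) / (S k).card)
          (fun r => (ν {s ∈ T | p ω s ≤ r}).toReal) atTop (Set.Icc 0 1) ∧
        TendstoUniformlyOn
          (fun k r => (∑ s ∈ (S k).filter (fun s => s ∈ U ∧ p ω s ≤ r), f s) / (S k).card)
          (fun r => (ν (U ∩ {s | p ω s ≤ r})).toReal) atTop (Set.Icc 0 1))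
    -- almost surely (a1)–(a3) hold for the realized p-value function
    (hae : ∀ᵐ ω ∂P,
      (∀ t ∈ Set.Icc (0:ℝ) 1, ν {s ∈ T | p ω s = t} = 0) ∧
      (αStar ω ∈ Set.Ioc 0 α → ∀ O : Set ℝ, IsOpen O → αStar ω ∈ O →
        ∃ s₁ ∈ O ∩ Set.Icc (0:ℝ) 1, ∃ s₂ ∈ O ∩ Set.Icc (0:ℝ) 1,
          s₁ / α < a ω s₁ / (ν T).toReal ∧ a ω s₂ / (ν T).toReal < s₂ / α) ∧
      (αStar ω = 0 → 0 < sInf (p ω '' T)))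
    -- the process is PRDS on U
    (hPRDS : ∀ (l : ℕ) (t : Fin l → EuclideanSpace ℝ (Fin d)), (∀ j, t j ∈ T) →
      ∀ j : Fin l, t j ∈ U →
      ∀ D : Set (Fin l → ℝ), MeasurableSet D →
      (∀ x y : Fin l → ℝ, x ∈ D → x ≤ y → y ∈ D) →
      ∃ g : ℝ → ℝ, MonotoneOn g (Set.Icc 0 1) ∧
        (fun ω => g (p ω (t j))) =ᵐ[P]
          P[(fun ω => D.indicator (fun _ => (1:ℝ)) (fun i => p ω (t i))) |
            MeasurableSpace.comap (fun ω => p ω (t j)) (inferInstance : MeasurableSpace ℝ)])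
    -- superuniformity of the null p-values
    (hsuper : ∀ t ∈ U, ∀ x ∈ Set.Icc (0:ℝ) 1,
      P {ω | p ω t ≤ x} ≤ ENNReal.ofReal x) :
    (∫ ω, Q ω ∂P) ≤ α * (ν U).toReal / (ν T).toReal ∧
    α * (ν U).toReal / (ν T).toReal ≤ α := by
  have hT := hT_open.measurableSet
  obtain ⟨C, hC⟩ := hf_bdd
  have hfinite : IsFiniteMeasure ν :=
    hν ▸ isFiniteMeasure_withDensity_of_le hT (hT_norm ▸ ENNReal.one_ne_top) hC
  have hνT : ν T ≠ 0 :=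
    hν ▸ withDensity_ofReal_restrict_ne_zero hT hf_meas hf_pos (hT_norm ▸ one_ne_zero)
  have hαS : ∀ ω, αStar ω = bhThreshold ν T α (p ω) := fun ω => by
    simp only [hαStar, ha, bhThreshold, cumulatedPValue, measureReal_def]
  obtain rfl : Q = fun ω => functionalFDP ν T U α (p ω) := funext fun ω => by
    rw [hQ, hV, hSr, functionalFDP_eq_ite hU_sub, hαS]
    rfl
  obtain ⟨S, -, hS, -, hG⟩ := hgrids
  simp only [Finset.sum_div] at hG
  refine fBH_controls_fFDR_general hT hU_meas hU_sub hνT (Ioo_subset_Ioc_self hα)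
    (fun t _ => hp_meas t) hp_meas' hp_val hS (w := fun k s => f s / (S k).card)
    (fun k s hs => div_nonneg (hf_pos s (hS k hs)).le (Nat.cast_nonneg _))
    (hG.mono fun _ h => h.1) (hG.mono fun _ h => h.2) ?_
    (fun l t ht j hj D hD hup => hPRDS l t ht j hj D hD fun x y hx hxy => hup hxy hx)
    fun t ht x hx => ENNReal.toReal_le_of_le_ofReal hx.1 (hsuper t ht x hx)
  filter_upwards [hae] with ω ⟨hfiber, hcross, hinf⟩
  simp only [hαS, ha] at hcross hinf
  refine ⟨hfiber, fun hτ => frequently_nhds_iff.2 fun O hτO hO => ?_, hinf⟩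
  obtain ⟨s, hs, -, -, hlt, -⟩ := hcross hτ O hO hτO
  exact ⟨s, hs.1, hs.2, hlt⟩
end

section
/- Suppose there is N_C ∈ ℕ such that #{s ∈ [0,D] : p(s) = t} ≤ N_C for every t ∈ (0,1]. Then sup_{r∈[0,1]} |#{s ∈ S_k : p(s) ≤ r}/#S_k − μ{s ∈ [0,D] : p(s) ≤ r}/D| → 0 as k → ∞. Moreover, if U ⊆ [0,D] is a finite union of disjoint intervals, then also sup_{r∈[0,1]} |#{s ∈ S_k ∩ U : p(s) ≤ r}/#S_k − μ(U ∩ {s : p(s) ≤ r})/D| → 0 as k → ∞. -/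
open Filter Set MeasureTheory
open scoped Classical

/-!
Cut `(0, D]` into the `N` cells `((j - 1) * D / N, j * D / N]`. Replacing the measure of a set `A`
by a count of grid points errs only on the cells that meet both `A` and its complement, so the error
relative to `D` is at most the number of these cut cells divided by `N`. An interval cuts at most
two cells. If `{p ≤ r}` cuts `K` cells, each of them contains a point where `p` exceeds `r`; with
`t > r` the least of these `K` values of `p`, the intermediate value theorem gives a point of
`{p = t}` in every cut cell, hence `K ≤ N_C`. So the error is `O(1 / N)`, uniformly in `r`.
-/

section CutCells

variable {α : Type*} [LinearOrder α] {x : ℕ → α} {N : ℕ}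

/-- The indices `j < N` of the cells `(x j, x (j + 1)]` that are cut by `A`, that is, meet both `A`
and its complement. The number of cut cells measures how badly the right endpoints `x (j + 1)`
sample the set `A`. -/
noncomputable def cutCells (x : ℕ → α) (N : ℕ) (A : Set α) : Finset ℕ :=
  {j ∈ Finset.range N | (Ioc (x j) (x (j + 1)) ∩ A).Nonempty ∧ (Ioc (x j) (x (j + 1)) \ A).Nonempty}

lemma mem_cutCells {A : Set α} {j : ℕ} :
    j ∈ cutCells x N A ↔ j < N ∧ (∃ y ∈ Ioc (x j) (x (j + 1)), y ∈ A) ∧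
      ∃ z ∈ Ioc (x j) (x (j + 1)), z ∉ A := by
  simp only [cutCells, Finset.mem_filter, Finset.mem_range, Set.Nonempty, mem_inter_iff,
    Set.mem_sdiff]

lemma cutCells_inter_subset (A B : Set α) :
    cutCells x N (A ∩ B) ⊆ cutCells x N A ∪ cutCells x N B := by
  intro j hj
  obtain ⟨hjN, ⟨y, hy, hyA, hyB⟩, z, hz, hzAB⟩ := mem_cutCells.1 hj
  rw [Finset.mem_union, mem_cutCells, mem_cutCells]
  by_cases hzA : z ∈ A
  · exact .inr ⟨hjN, ⟨y, hy, hyB⟩, z, hz, fun hzB => hzAB ⟨hzA, hzB⟩⟩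
  · exact .inl ⟨hjN, ⟨y, hy, hyA⟩, z, hz, hzA⟩

lemma cutCells_iUnion_subset {κ : Type*} [Fintype κ] (I : κ → Set α) :
    cutCells x N (⋃ i, I i) ⊆ Finset.univ.biUnion fun i => cutCells x N (I i) := by
  intro j hj
  obtain ⟨hjN, ⟨y, hy, hyU⟩, z, hz, hzU⟩ := mem_cutCells.1 hj
  obtain ⟨i, hi⟩ := mem_iUnion.1 hyU
  exact Finset.mem_biUnion.2 ⟨i, Finset.mem_univ i, mem_cutCells.2
    ⟨hjN, ⟨y, hy, hi⟩, z, hz, fun hzi => hzU (mem_iUnion_of_mem i hzi)⟩⟩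

lemma card_cutCells_le_two_of_ordConnected (hx : Monotone x) {I : Set α} (hI : I.OrdConnected) :
    (cutCells x N I).card ≤ 2 := by
  rcases (cutCells x N I).eq_empty_or_nonempty with hempty | hne
  · simp [hempty]
  suffices hsub : cutCells x N I ⊆ {(cutCells x N I).min' hne, (cutCells x N I).max' hne} from
    (Finset.card_le_card hsub).trans Finset.card_le_two
  intro j hj
  obtain ⟨-, ⟨a, ha, haI⟩, -⟩ := mem_cutCells.1 (Finset.min'_mem _ hne)
  obtain ⟨-, ⟨b, hb, hbI⟩, -⟩ := mem_cutCells.1 (Finset.max'_mem _ hne)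
  obtain ⟨-, -, z, hz, hzI⟩ := mem_cutCells.1 hj
  rw [Finset.mem_insert, Finset.mem_singleton]
  by_contra! hextreme
  have hmin : (cutCells x N I).min' hne + 1 ≤ j := (Finset.min'_le _ j hj).lt_of_ne' hextreme.1
  have hmax : j + 1 ≤ (cutCells x N I).max' hne := (Finset.le_max' _ j hj).lt_of_ne hextreme.2
  have haz : a ≤ z := ha.2.trans ((hx hmin).trans hz.1.le)
  have hzb : z ≤ b := hz.2.trans ((hx hmax).trans hb.1.le)
  exact hzI (hI.out haI hbI ⟨haz, hzb⟩)

lemma card_cutCells_iUnion_le (hx : Monotone x) {κ : Type*} [Fintype κ] {I : κ → Set α}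
    (hI : ∀ i, (I i).OrdConnected) :
    (cutCells x N (⋃ i, I i)).card ≤ Fintype.card κ * 2 :=
  (Finset.card_le_card (cutCells_iUnion_subset I)).trans <|
    Finset.card_biUnion_le_card_mul _ _ 2 fun i _ => card_cutCells_le_two_of_ordConnected hx (hI i)

lemma Ioc_cell_subset (hx : Monotone x) {j : ℕ} (hj : j < N) :
    Ioc (x j) (x (j + 1)) ⊆ Ioc (x 0) (x N) :=
  Ioc_subset_Ioc (hx j.zero_le) (hx hj)

end CutCells

section Sublevel

variable {α β : Type*} [ConditionallyCompleteLinearOrder α] [TopologicalSpace α] [OrderTopology α]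
  [DenselyOrdered α] [LinearOrder β] [TopologicalSpace β] [OrderClosedTopology β]

lemma card_cutCells_sublevel_le {x : ℕ → α} (hx : Monotone x) {N : ℕ} {f : α → β}
    (hf : ContinuousOn f (Ioc (x 0) (x N))) {r : β} {C : ℕ}
    (hlevel : ∀ t, r < t → {s ∈ Ioc (x 0) (x N) | f s = t}.encard ≤ C) :
    (cutCells x N {s | f s ≤ r}).card ≤ C := by
  set K := cutCells x N {s | f s ≤ r}
  rcases K.eq_empty_or_nonempty with hempty | hne
  · simp [hempty]
  have hcell : ∀ j ∈ K, Ioc (x j) (x (j + 1)) ⊆ Ioc (x 0) (x N) := fun j hj =>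
    Ioc_cell_subset hx (mem_cutCells.1 hj).1
  have habove : ∀ j ∈ K, ∃ z ∈ Ioc (x j) (x (j + 1)), r < f z := fun j hj =>
    (mem_cutCells.1 hj).2.2.imp fun _ => And.imp_right not_le.1
  choose! z hz hrz using habove
  obtain ⟨i, hi, hmin⟩ := K.exists_min_image (fun j => f (z j)) hne
  have hattained : ∀ j ∈ K, ∃ w ∈ Ioc (x j) (x (j + 1)), f w = f (z i) := by
    intro j hj
    obtain ⟨-, ⟨y, hy, hyr⟩, -⟩ := mem_cutCells.1 hj
    exact isPreconnected_Ioc.intermediate_value hy (hz j hj) (hf.mono (hcell j hj))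
      ⟨hyr.trans (hrz i hi).le, hmin j hj⟩
  choose! w hw hwt using hattained
  have hinj : InjOn w K := fun j hj k hk hjk =>
    hx.pairwise_disjoint_on_Ioc_succ.eq (Set.not_disjoint_iff.2 ⟨w j, hw j hj, hjk ▸ hw k hk⟩)
  have hmaps : MapsTo w K {s ∈ Ioc (x 0) (x N) | f s = f (z i)} := fun j hj =>
    ⟨hcell j hj (hw j hj), hwt j hj⟩
  have hcard := (encard_le_encard_of_injOn hmaps hinj).trans (hlevel _ (hrz i hi))
  rw [encard_coe_eq_coe_finsetCard] at hcard
  exact_mod_cast hcard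

end Sublevel

section Sampling

variable {α : Type*} [LinearOrder α] [TopologicalSpace α] [CompactIccSpace α] [MeasurableSpace α]
  {μ : Measure α} [IsLocallyFiniteMeasure μ] {x : ℕ → α}

lemma abs_measureReal_cell_sub_le {N j : ℕ} (hj : j < N) (A : Set α) [DecidablePred (· ∈ A)] :
    |μ.real (Ioc (x j) (x (j + 1)) ∩ A) -
        if x (j + 1) ∈ A then μ.real (Ioc (x j) (x (j + 1))) else 0| ≤
      if j ∈ cutCells x N A then μ.real (Ioc (x j) (x (j + 1))) else 0 := by
  set cell := Ioc (x j) (x (j + 1))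
  have hle : μ.real (cell ∩ A) ≤ μ.real cell :=
    measureReal_mono inter_subset_left measure_Ioc_lt_top.ne
  have hnonneg : 0 ≤ μ.real (cell ∩ A) := measureReal_nonneg
  rcases cell.eq_empty_or_nonempty with hempty | hne
  · simp [hempty]
  have hright : x (j + 1) ∈ cell := right_mem_Ioc.2 (nonempty_Ioc.1 hne)
  by_cases hcut : j ∈ cutCells x N A
  · rw [if_pos hcut, abs_le]
    split_ifs <;> constructor <;> linarith
  by_cases hmem : x (j + 1) ∈ A
  · have hsub : cell ⊆ A := fun z hz => by_contra fun hzA =>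
      hcut (mem_cutCells.2 ⟨hj, ⟨_, hright, hmem⟩, z, hz, hzA⟩)
    simp [hcut, hmem, inter_eq_self_of_subset_left hsub]
  · have hdisj : cell ∩ A = ∅ := eq_empty_of_forall_notMem fun y ⟨hy, hyA⟩ =>
      hcut (mem_cutCells.2 ⟨hj, ⟨y, hy, hyA⟩, _, hright, hmem⟩)
    simp [hcut, hmem, hdisj]

variable [OrderClosedTopology α] [OpensMeasurableSpace α]

lemma measureReal_Ioc_inter_eq_sum (hx : Monotone x) (N : ℕ) (A : Set α) :
    μ.real (Ioc (x 0) (x N) ∩ A) = ∑ j ∈ Finset.range N, μ.real (Ioc (x j) (x (j + 1)) ∩ A) := by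
  have hcells : ⋃ j ∈ Finset.range N, Ioc (x j) (x (j + 1)) = Ioc (x 0) (x N) := by
    simpa using hx.biUnion_Ico_Ioc_map_succ 0 N
  simp_rw [← measureReal_restrict_apply (μ := μ) (s := A) measurableSet_Ioc, ← hcells]
  exact measureReal_biUnion_finset (hx.pairwise_disjoint_on_Ioc_succ.set_pairwise _)
    (fun _ _ => measurableSet_Ioc) (fun _ _ => measure_Ioc_lt_top.ne)

lemma abs_measureReal_sub_sum_le_sum_cutCells (hx : Monotone x) (N : ℕ) (A : Set α)
    [DecidablePred (· ∈ A)] :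
    |μ.real (Ioc (x 0) (x N) ∩ A) -
        ∑ j ∈ Finset.range N with x (j + 1) ∈ A, μ.real (Ioc (x j) (x (j + 1)))| ≤
      ∑ j ∈ cutCells x N A, μ.real (Ioc (x j) (x (j + 1))) := by
  have hcut : {j ∈ Finset.range N | j ∈ cutCells x N A} = cutCells x N A :=
    Finset.filter_mem_eq_inter.trans (Finset.inter_eq_right.2 (Finset.filter_subset _ _))
  rw [measureReal_Ioc_inter_eq_sum hx, Finset.sum_filter, ← Finset.sum_sub_distrib, ← hcut,
    Finset.sum_filter]
  exact (Finset.abs_sum_le_sum_abs _ _).trans <| Finset.sum_le_sum fun j hj =>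
    abs_measureReal_cell_sub_le (Finset.mem_range.1 hj) A

end Sampling

section EquispacedGrid

variable {D : ℝ} {N : ℕ}

/-- The equispaced grid of mesh `D / N` on `[0, D]`, with `equigrid D N 0 = 0`; the points of the
sampling grid `S_k` are those of index `1, …, N` for `N = n k`. -/
noncomputable def equigrid (D : ℝ) (N j : ℕ) : ℝ := j * D / N

lemma equigrid_zero : equigrid D N 0 = 0 := by simp [equigrid]

lemma equigrid_self (hN : N ≠ 0) : equigrid D N N = D :=
  mul_div_cancel_left₀ D (Nat.cast_ne_zero.2 hN)

lemma monotone_equigrid (hD : 0 ≤ D) : Monotone (equigrid D N) := fun i j hij => by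
  unfold equigrid
  gcongr

lemma volume_real_Ioc_equigrid (hD : 0 ≤ D) (j : ℕ) :
    volume.real (Ioc (equigrid D N j) (equigrid D N (j + 1))) = D / N := by
  rw [Real.volume_real_Ioc_of_le (monotone_equigrid hD j.le_succ), equigrid, equigrid]
  push_cast
  ring

lemma abs_volume_div_sub_card_div_le (hD : 0 < D) (hN : N ≠ 0) (A : Set ℝ)
    [DecidablePred (· ∈ A)] :
    |volume.real (Icc 0 D ∩ A) / D -
        ({j ∈ Finset.range N | equigrid D N (j + 1) ∈ A}.card : ℝ) / N| ≤
      (cutCells (equigrid D N) N A).card / N := by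
  have h := abs_measureReal_sub_sum_le_sum_cutCells (μ := volume)
    (monotone_equigrid (N := N) hD.le) N A
  simp only [equigrid_zero, equigrid_self hN, volume_real_Ioc_equigrid hD.le, Finset.sum_const,
    nsmul_eq_mul] at h
  rw [measureReal_congr (Ioc_ae_eq_Icc.inter (ae_eq_refl A))] at h
  have hscale (v c : ℝ) : v / D - c / N = (v - c * (D / N)) / D := by field_simp
  rw [hscale, abs_div, abs_of_pos hD, div_le_iff₀ hD]
  exact h.trans_eq (by ring)

end EquispacedGrid

lemma tendstoUniformlyOn_of_abs_sub_le_const_div {ι β : Type*} {l : Filter ι} {n : ι → ℕ}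
    (hn : Tendsto n l atTop) {F : ι → β → ℝ} {f : β → ℝ} {s : Set β} {C : ℝ}
    (hbound : ∀ k, n k ≠ 0 → ∀ r ∈ s, |f r - F k r| ≤ C / n k) : TendstoUniformlyOn F f l s := by
  rw [Metric.tendstoUniformlyOn_iff]
  intro ε hε
  have hlim : Tendsto (fun k => C / (n k : ℝ)) l (nhds 0) :=
    (tendsto_const_div_atTop_nhds_zero_nat C).comp hn
  filter_upwards [hlim.eventually_lt_const hε, hn.eventually_ne_atTop 0] with k hk hnk r hr
  exact (hbound k hnk r hr).trans_lt hk

/- On the left `j` is real: `Finset.Icc 1 N` is an interval of natural numbers, coerced elementwise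
to a `Finset ℝ`. -/
lemma card_filter_Icc_one_cast (N : ℕ) (P : ℝ → Prop) [DecidablePred P] :
    ((Finset.Icc 1 N).filter (fun j => P (j : ℝ))).card =
      ((Finset.range N).filter fun j : ℕ => P (j + 1 : ℕ)).card := by
  have hshift : Finset.Icc 1 N = (Finset.range N).image (· + 1) := by
    rw [Finset.range_eq_Ico, Finset.image_add_right_Ico, zero_add, Finset.Ico_add_one_right_eq_Icc]
  simp only [Finset.bind_def, Finset.pure_def, Finset.sup_singleton_apply, hshift,
    Finset.image_image]
  rw [Finset.filter_image, Finset.card_image_of_injective]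
  · rfl
  · exact Nat.cast_injective.comp (add_left_injective 1)

lemma encard_level_le_of_mapsTo_Iic {α β : Type*} [Preorder β] {f : α → β} {s : Set α} {a b : β}
    {C : ℕ∞} (hf : MapsTo f s (Iic b)) (hlevel : ∀ t ∈ Ioc a b, {y ∈ s | f y = t}.encard ≤ C)
    (t : β) (hat : a < t) : {y ∈ s | f y = t}.encard ≤ C := by
  by_cases htb : t ≤ b
  · exact hlevel t ⟨hat, htb⟩
  · have hempty : {y ∈ s | f y = t} = ∅ :=
      eq_empty_of_forall_notMem fun y hy => htb (hy.2 ▸ hf hy.1)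
    simp [hempty]

section UniformConvergence

variable {D : ℝ} {p : ℝ → ℝ} {r₀ : ℝ} {C : ℕ}

lemma card_cutCells_iUnion_inter_sublevel_le {κ : Type*} [Fintype κ] {I : κ → Set ℝ} {N : ℕ}
    (hD : 0 ≤ D) (hN : N ≠ 0) (hp : ContinuousOn p (Icc 0 D))
    (hlevel : ∀ t, r₀ < t → {s ∈ Icc 0 D | p s = t}.encard ≤ C)
    (hI : ∀ i, (I i).OrdConnected) {r : ℝ} (hr : r₀ ≤ r) :
    (cutCells (equigrid D N) N ((⋃ i, I i) ∩ {s | p s ≤ r})).card ≤ Fintype.card κ * 2 + C := by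
  have hmono : Monotone (equigrid D N) := monotone_equigrid hD
  have hsub : Ioc (equigrid D N 0) (equigrid D N N) ⊆ Icc 0 D := by
    rw [equigrid_zero, equigrid_self hN]
    exact Ioc_subset_Icc_self
  have hsublevel : (cutCells (equigrid D N) N {s | p s ≤ r}).card ≤ C :=
    card_cutCells_sublevel_le hmono (hp.mono hsub) fun t ht =>
      (encard_le_encard (inter_subset_inter_left {s | p s = t} hsub)).trans
        (hlevel t (hr.trans_lt ht))
  exact (Finset.card_le_card (cutCells_inter_subset _ _)).trans <|
    (Finset.card_union_le _ _).trans <| add_le_add (card_cutCells_iUnion_le hmono hI) hsublevel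

lemma tendstoUniformlyOn_card_equigrid_iUnion_inter_sublevel (hD : 0 < D)
    (hp : ContinuousOn p (Icc 0 D)) (hlevel : ∀ t, r₀ < t → {s ∈ Icc 0 D | p s = t}.encard ≤ C)
    {ι : Type*} {l : Filter ι} {n : ι → ℕ} (hn : Tendsto n l atTop)
    {κ : Type*} [Finite κ] {I : κ → Set ℝ} (hI : ∀ i, (I i).OrdConnected) :
    TendstoUniformlyOn
      (fun k r => ({j ∈ Finset.range (n k) |
        equigrid D (n k) (j + 1) ∈ (⋃ i, I i) ∩ {s | p s ≤ r}}.card : ℝ) / n k)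
      (fun r => volume.real (Icc 0 D ∩ ((⋃ i, I i) ∩ {s | p s ≤ r})) / D) l (Ici r₀) := by
  cases nonempty_fintype κ
  refine tendstoUniformlyOn_of_abs_sub_le_const_div (C := (Fintype.card κ * 2 + C : ℕ)) hn
    fun k hk r hr => (abs_volume_div_sub_card_div_le hD hk _).trans ?_
  gcongr
  exact card_cutCells_iUnion_inter_sublevel_le hD.le hk hp hlevel hI hr

theorem oneD_sufficient_criteria_general (hD : 0 < D) (hp : ContinuousOn p (Icc 0 D))
    (hlevel : ∀ t, r₀ < t → {s ∈ Icc 0 D | p s = t}.encard ≤ C)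
    {ι : Type*} {l : Filter ι} {n : ι → ℕ} (hn : Tendsto n l atTop) :
    TendstoUniformlyOn
      (fun k r => (((Finset.Icc 1 (n k)).filter
          (fun j => p ((j : ℝ) * D / n k) ≤ r)).card : ℝ) / n k)
      (fun r => (volume {s ∈ Icc 0 D | p s ≤ r}).toReal / D)
      l (Ici r₀) ∧
    ∀ U : Set ℝ, U ⊆ Icc 0 D →
      (∃ (m : ℕ) (I : Fin m → Set ℝ), (∀ i, (I i).OrdConnected) ∧ U = ⋃ i, I i) →
      TendstoUniformlyOn
        (fun k r => (((Finset.Icc 1 (n k)).filter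
            (fun j => (j : ℝ) * D / n k ∈ U ∧ p ((j : ℝ) * D / n k) ≤ r)).card : ℝ) / n k)
        (fun r => (volume (U ∩ {s | p s ≤ r})).toReal / D)
        l (Ici r₀) := by
  constructor
  · convert! tendstoUniformlyOn_card_equigrid_iUnion_inter_sublevel hD hp hlevel hn
      (I := fun _ : Unit => univ) fun _ => ordConnected_univ using 3
    · rw [card_filter_Icc_one_cast _ (fun y => p (y * D / _) ≤ _)]
      simp [equigrid]
    · rw [iUnion_const, univ_inter]
      rfl
  · rintro U hU ⟨m, I, hI, rfl⟩
    convert tendstoUniformlyOn_card_equigrid_iUnion_inter_sublevel hD hp hlevel hn hI using 4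
    · rw [card_filter_Icc_one_cast _ (fun y => y * D / _ ∈ ⋃ i, I i ∧ p (y * D / _) ≤ _)]
      simp [equigrid]
    · rw [inter_eq_self_of_subset_right (inter_subset_left.trans hU)]
      rfl

end UniformConvergence

/-- for a continuous p-value function `p : [0,D] → [0,1]` whose level sets at
levels `t ∈ (0,1]` have at most `N_C` points, the empirical cumulated p-value functions along
the nested equispaced grids `S_k = {jD/n_k : j = 1,…,n_k}` converge uniformly on `[0,1]` to
`r ↦ μ{s ∈ [0,D] : p s ≤ r}/D`; moreover, if `U ⊆ [0,D]` is a finite union of disjoint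
intervals, the corresponding `U`-restricted empirical functions converge uniformly to
`r ↦ μ(U ∩ {s : p s ≤ r})/D`. -/
theorem oneD_sufficient_criteria
    (D : ℝ) (hD : 0 < D)
    (p : ℝ → ℝ) (hp_cont : ContinuousOn p (Set.Icc 0 D))
    (hp_val : Set.MapsTo p (Set.Icc 0 D) (Set.Icc 0 1))
    (N_C : ℕ)
    (hNC : ∀ t ∈ Set.Ioc (0:ℝ) 1, {s ∈ Set.Icc 0 D | p s = t}.encard ≤ N_C)
    (n : ℕ → ℕ) (hn_pos : ∀ k, 0 < n k) (hn_div : ∀ k, n k ∣ n (k + 1))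
    (hn_tendsto : Tendsto n atTop atTop) :
    TendstoUniformlyOn
      (fun k r => (((Finset.Icc 1 (n k)).filter
          (fun j => p ((j : ℝ) * D / n k) ≤ r)).card : ℝ) / n k)
      (fun r => (volume {s ∈ Set.Icc 0 D | p s ≤ r}).toReal / D)
      atTop (Set.Icc 0 1) ∧
    ∀ U : Set ℝ, U ⊆ Set.Icc 0 D →
      (∃ (m : ℕ) (I : Fin m → Set ℝ), (∀ i, (I i).OrdConnected) ∧
        Pairwise (Function.onFun Disjoint I) ∧ U = ⋃ i, I i) →
      TendstoUniformlyOn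
        (fun k r => (((Finset.Icc 1 (n k)).filter
            (fun j => (j : ℝ) * D / n k ∈ U ∧ p ((j : ℝ) * D / n k) ≤ r)).card : ℝ) / n k)
        (fun r => (volume (U ∩ {s | p s ≤ r})).toReal / D)
        atTop (Set.Icc 0 1) := by
  have hlevel := encard_level_le_of_mapsTo_Iic (hp_val.mono_right Icc_subset_Iic_self) hNC
  obtain ⟨hall, hunion⟩ := oneD_sufficient_criteria_general hD hp_cont hlevel hn_tendsto
  exact ⟨hall.mono Icc_subset_Ici_self, fun U hU ⟨m, I, hI, _, hUI⟩ =>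
    (hunion U hU ⟨m, I, hI, hUI⟩).mono Icc_subset_Ici_self⟩
end

section
/- Hypothesis i is rejected by the Benjamini–Hochberg procedure at level α if and only if p̃_i ≤ α. -/
open scoped Classical

/-!
For a p-value `s`, the inequality `m * s / #{l : p_l ≤ s} ≤ α` says that `s` lies below the BH line
`j ↦ (j / m) * α` at its own rank `j = #{l : p_l ≤ s}`. So, for `α < 1`, `p̃_i ≤ α` means that some
p-value `s ≥ p_i` lies below the line at its own rank. That rank is then at most `k`, and so
`p_i ≤ s ≤ (k / m) * α`. Conversely, if `p_i ≤ (k / m) * α`, the largest p-value `s ≤ (k / m) * α`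
has rank at least `k`, hence lies below the line at its own rank.
-/

section Count

variable {ι β : Type*} [Fintype ι]

/-- The number of indices `l` with `p l ≤ t`. For `t` among the values of `p` this is the rank of
`t`, ties being given the largest rank. -/
def countLE [LE β] [DecidableLE β] (p : ι → β) (t : β) : ℕ :=
  (Finset.univ.filter (fun l => p l ≤ t)).card

theorem countLE_le_card [LE β] [DecidableLE β] (p : ι → β) (t : β) :
    countLE p t ≤ Fintype.card ι :=
  Finset.card_le_univ _

theorem countLE_mono [Preorder β] [DecidableLE β] (p : ι → β) : Monotone (countLE p) :=
  fun _ _ hst => Finset.card_le_card <|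
    Finset.monotone_filter_right _ fun _ _ hl => hl.trans hst

theorem countLE_apply_pos [Preorder β] [DecidableLE β] (p : ι → β) (i : ι) :
    0 < countLE p (p i) :=
  Finset.card_pos.2 ⟨i, by simp⟩

theorem exists_countLE_apply_eq [LinearOrder β] {p : ι → β} {t : β} {i : ι} (hi : p i ≤ t) :
    ∃ l, p i ≤ p l ∧ p l ≤ t ∧ countLE p (p l) = countLE p t := by
  obtain ⟨l, hl, hmax⟩ :=
    Finset.exists_max_image (Finset.univ.filter (fun l => p l ≤ t)) p ⟨i, by simpa using hi⟩
  simp only [Finset.mem_filter_univ] at hl hmax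
  refine ⟨l, hmax i hi, hl, (countLE_mono p hl).antisymm (Finset.card_le_card ?_)⟩
  exact Finset.monotone_filter_right _ fun j _ => hmax j

end Count

section BenjaminiHochberg

variable {ι K : Type*} [Fintype ι] [Field K] [LinearOrder K]

/-- The `j`-th critical value `(j / m) * α` of the Benjamini–Hochberg procedure at level `α` for
`m` hypotheses, where `m` is the cardinality of the index type `ι`. -/
def bhCriticalValue (ι : Type*) [Fintype ι] (α : K) (j : ℕ) : K :=
  ((j : K) / Fintype.card ι) * α

/-- The number `k` of the Benjamini–Hochberg procedure at level `α`: the procedure rejects `i` iff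
`p i ≤ bhCriticalValue ι α k`. The condition `p_(j) ≤ (j / m) * α` on order statistics is encoded as
`j ≤ #{l : p l ≤ (j / m) * α}`, which always holds for `j = 0`. -/
noncomputable def bhRejectionCount (p : ι → K) (α : K) : ℕ :=
  sSup {j | j ≤ Fintype.card ι ∧ j ≤ countLE p (bhCriticalValue ι α j)}

/-- The Benjamini–Hochberg adjusted p-value `p̃_i`. The minimum over the values `s ≥ p i` of `p` is
taken over the indices `l` with `p i ≤ p l`. -/
def bhAdjusted (p : ι → K) (i : ι) : K :=
  (Finset.univ.filter (fun l => p i ≤ p l)).inf'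
    (Finset.filter_nonempty_iff.2 ⟨i, Finset.mem_univ i, le_rfl⟩)
    (fun l => min 1 ((Fintype.card ι : K) * p l / countLE p (p l)))

theorem isGreatest_bhRejectionCount (p : ι → K) (α : K) :
    IsGreatest {j | j ≤ Fintype.card ι ∧ j ≤ countLE p (bhCriticalValue ι α j)}
      (bhRejectionCount p α) :=
  have hbdd : BddAbove {j | j ≤ Fintype.card ι ∧ j ≤ countLE p (bhCriticalValue ι α j)} :=
    ⟨Fintype.card ι, fun _ hj => hj.1⟩
  ⟨Nat.sSup_mem ⟨0, Nat.zero_le _, Nat.zero_le _⟩ hbdd, fun _ hj => le_csSup hbdd hj⟩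

theorem bhRejectionCount_le_countLE (p : ι → K) (α : K) :
    bhRejectionCount p α ≤ countLE p (bhCriticalValue ι α (bhRejectionCount p α)) :=
  (isGreatest_bhRejectionCount p α).1.2

theorem countLE_le_bhRejectionCount {p : ι → K} {α t : K}
    (ht : t ≤ bhCriticalValue ι α (countLE p t)) : countLE p t ≤ bhRejectionCount p α :=
  (isGreatest_bhRejectionCount p α).2 ⟨countLE_le_card p t, countLE_mono p ht⟩

variable [IsStrictOrderedRing K]

theorem bhCriticalValue_mono (ι : Type*) [Fintype ι] {α : K} (hα : 0 ≤ α) :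
    Monotone (bhCriticalValue ι α) := by
  intro a b hab
  unfold bhCriticalValue
  gcongr

theorem card_mul_div_le_iff_le_bhCriticalValue [Nonempty ι] {α t : K} {n : ℕ} (hn : 0 < n) :
    (Fintype.card ι : K) * t / n ≤ α ↔ t ≤ bhCriticalValue ι α n := by
  have hcard : (0 : K) < Fintype.card ι := Nat.cast_pos.2 Fintype.card_pos
  rw [bhCriticalValue, div_le_iff₀ (Nat.cast_pos.2 hn), div_mul_eq_mul_div, le_div_iff₀ hcard,
    mul_comm t, mul_comm α]

theorem le_bhCriticalValue_bhRejectionCount_iff {p : ι → K} {α : K} (hα : 0 ≤ α) (i : ι) :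
    p i ≤ bhCriticalValue ι α (bhRejectionCount p α) ↔
      ∃ l, p i ≤ p l ∧ p l ≤ bhCriticalValue ι α (countLE p (p l)) := by
  constructor
  · intro hi
    obtain ⟨l, hil, hl, hcount⟩ := exists_countLE_apply_eq hi
    have hrank : bhRejectionCount p α ≤ countLE p (p l) :=
      hcount ▸ bhRejectionCount_le_countLE p α
    exact ⟨l, hil, hl.trans (bhCriticalValue_mono ι hα hrank)⟩
  · rintro ⟨l, hil, hl⟩
    calc p i ≤ p l := hil
      _ ≤ bhCriticalValue ι α (countLE p (p l)) := hl
      _ ≤ bhCriticalValue ι α (bhRejectionCount p α) :=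
        bhCriticalValue_mono ι hα (countLE_le_bhRejectionCount hl)

theorem bhAdjusted_le_iff {p : ι → K} {α : K} (hα : α < 1) (i : ι) :
    bhAdjusted p i ≤ α ↔ ∃ l, p i ≤ p l ∧ p l ≤ bhCriticalValue ι α (countLE p (p l)) := by
  have : Nonempty ι := ⟨i⟩
  simp only [bhAdjusted, Finset.inf'_le_iff, Finset.mem_filter_univ, min_le_iff, hα.not_ge,
    false_or, card_mul_div_le_iff_le_bhCriticalValue (countLE_apply_pos p _)]

theorem BH_adjusted_pvalues_iff_general {α : K} (hα : α ∈ Set.Ico 0 1) (p : ι → K) (i : ι) :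
    p i ≤ bhCriticalValue ι α (bhRejectionCount p α) ↔ bhAdjusted p i ≤ α :=
  (le_bhCriticalValue_bhRejectionCount_iff hα.1 i).trans (bhAdjusted_le_iff hα.2 i).symm

end BenjaminiHochberg

/-- hypothesis `i` is rejected by the Benjamini–Hochberg procedure at level `α`
iff the BH-adjusted p-value `p̃_i` is at most `α`.

BH rejects `i` iff `p_i ≤ (k/m)·α` where `k = max {j : p_(j) ≤ (j/m)·α}`; we use the equivalent
characterization `p_(j) ≤ c ↔ #{l : p_l ≤ c} ≥ j`, so `k = sup {j ≤ m : j ≤ #{l : p_l ≤ (j/m)·α}}`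
(a set containing `0`).  The adjusted p-value is
`p̃_i = min {min (1, m·s/#{l : p_l ≤ s}) : s ∈ {p_1,…,p_m}, s ≥ p_i}`. -/
theorem BH_adjusted_pvalues_iff
    (m : ℕ) (hm : 1 ≤ m) (α : ℝ) (hα : α ∈ Set.Ioo (0:ℝ) 1)
    (p : Fin m → ℝ) (hp_val : ∀ i, p i ∈ Set.Icc (0:ℝ) 1)
    (k : ℕ)
    (hk : k = sSup {j | j ≤ m ∧
      j ≤ (Finset.univ.filter (fun l => p l ≤ ((j : ℝ) / m) * α)).card})
    (padj : Fin m → ℝ)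
    (hpadj : ∀ i, padj i =
      (Finset.univ.filter (fun l => p i ≤ p l)).inf'
        (by
          refine ⟨i, ?_⟩
          simp)
        (fun l => min 1 ((m : ℝ) * p l /
          (Finset.univ.filter (fun l' => p l' ≤ p l)).card))) :
    ∀ i, (p i ≤ ((k : ℝ) / m) * α ↔ padj i ≤ α) := by
  intro i
  simpa only [hk, hpadj, bhCriticalValue, bhRejectionCount, bhAdjusted, countLE, Fintype.card_fin]
    using BH_adjusted_pvalues_iff_general (Set.Ioo_subset_Ico_self hα) p i
end
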